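/- arXiv:math/0609760 — 4 statements merged into one kernel-verified Lean document; each statement's English description precedes it below -/
import Mathlib

section
/- Let G be an arbitrary finite abelian group, F an algebraically closed field of characteristic different from 2, and R a G-graded finite-dimensional associative superalgebra which is simple as an associative algebra and whose G-grading is elementary. Then, as a G-graded superalgebra, R is isomorphic to one of the superalgebras Q(θ;h) or A(θ;p̄). -/
open scoped TensorProduct

/-- A `G`-grading on an `F`-algebra `R`: an internal direct sum vector-space
decomposition `R = ⊕_{g ∈ G} A g` with `A g * A h ⊆ A (g * h)`. -/
structure IsAlgGrading (F : Type*) [Field F] (G : Type*) [Group G] [DecidableEq G]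
    {R : Type*} [Ring R] [Algebra F R] (A : G → Submodule F R) : Prop where
  internal : DirectSum.IsInternal A
  mul_mem : ∀ {g h : G} {x y : R}, x ∈ A g → y ∈ A h → x * y ∈ A (g * h)

/-- A superalgebra structure on an `F`-algebra `R`: a `ℤ₂`-grading `R = R₀ ⊕ R₁`. -/
structure IsSuperGrading (F : Type*) [Field F] {R : Type*} [Ring R] [Algebra F R]
    (S : ZMod 2 → Submodule F R) : Prop where
  internal : DirectSum.IsInternal S
  mul_mem : ∀ {p q : ZMod 2} {x y : R}, x ∈ S p → y ∈ S q → x * y ∈ S (p + q)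

/-- The sign `(-1)^{pq}` occurring in the superinvolution identity. -/
def superSign (F : Type*) [Field F] (p q : ZMod 2) : F := if p = 1 ∧ q = 1 then -1 else 1

/-- A superinvolution on a superalgebra `R = ⊕ S p`:
a `ℤ₂`-graded linear map of order 2 with `(ab)* = (-1)^{|a||b|} b* a*`. -/
structure IsSuperinvolution (F : Type*) [Field F] {R : Type*} [Ring R] [Algebra F R]
    (S : ZMod 2 → Submodule F R) (φ : R →ₗ[F] R) : Prop where
  invol : ∀ x, φ (φ x) = x
  graded : ∀ (p : ZMod 2) (x : R), x ∈ S p → φ x ∈ S p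
  anti : ∀ {p q : ZMod 2} {x y : R}, x ∈ S p → y ∈ S q →
    φ (x * y) = superSign F p q • (φ y * φ x)

/-- A grading is fine if every nonzero homogeneous component is one-dimensional. -/
def IsFineGrading (F : Type*) [Field F] {G R : Type*} [Group G] [Ring R] [Algebra F R]
    (A : G → Submodule F R) : Prop :=
  ∀ g, A g ≠ ⊥ → Module.finrank F (A g) = 1

/-- Compatibility of a `G`-grading with a superalgebra structure:
`R_g = (R_g ∩ R₀) ⊕ (R_g ∩ R₁)`. -/
def SuperCompatible (F : Type*) [Field F] {G R : Type*} [Group G] [Ring R] [Algebra F R]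
    (A : G → Submodule F R) (S : ZMod 2 → Submodule F R) : Prop :=
  ∀ g, A g = (A g ⊓ S 0) ⊔ (A g ⊓ S 1)

/-- The homogeneous component of degree `g` of the elementary grading on a matrix
algebra determined by the tuple `t`: it is spanned by the matrix units `E a b` with
`(t a)⁻¹ * t b = g`. -/
def elemGrading (F : Type*) [Field F] {G : Type*} [Group G] {ι : Type*} (t : ι → G) (g : G) :
    Submodule F (Matrix ι ι F) where
  carrier := {X | ∀ a b, (t a)⁻¹ * t b ≠ g → X a b = 0}
  add_mem' := by
    intro X Y hX hY a b h
    simp only [Matrix.add_apply, hX a b h, hY a b h, add_zero]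
  zero_mem' := by intro a b h; simp
  smul_mem' := by
    intro c X hX a b h
    simp only [Matrix.smul_apply, hX a b h, smul_zero]

/-- The `ℤ₂`-components of the matrix superalgebra structure determined by a parity
function `π` on the indices: the component of parity `p` consists of the matrices
supported on positions `(a,b)` with `π a + π b = p`. -/
def parSuper (F : Type*) [Field F] {ι : Type*} (π : ι → ZMod 2) (p : ZMod 2) :
    Submodule F (Matrix ι ι F) where
  carrier := {X | ∀ a b, π a + π b ≠ p → X a b = 0}
  add_mem' := by
    intro X Y hX hY a b h
    simp only [Matrix.add_apply, hX a b h, hY a b h, add_zero]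
  zero_mem' := by intro a b h; simp
  smul_mem' := by
    intro c X hX a b h
    simp only [Matrix.smul_apply, hX a b h, smul_zero]

/-- The parity function of the matrix superalgebra `M_{n,m}(F)`, with indices
`Fin n ⊕ Fin m`: the first block is even, the second odd. -/
def matPar {n m : ℕ} : Fin n ⊕ Fin m → ZMod 2 := Sum.elim (fun _ => 0) (fun _ => 1)

/-- The superalgebra structure of the matrix superalgebra `M_{n,m}(F)`: the even part
consists of block-diagonal, the odd part of block-antidiagonal matrices. -/
def matSuper (F : Type*) [Field F] (n m : ℕ) (p : ZMod 2) :
    Submodule F (Matrix (Fin n ⊕ Fin m) (Fin n ⊕ Fin m) F) :=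
  parSuper F matPar p

/-- The `ℤ₂`-components of the superalgebra structure of type `Q`, determined by the
index involution `sw` (which exchanges the two copies inside each block):
the even part consists of `sw`-invariant matrices, the odd part of `sw`-anti-invariant ones. -/
def swSuper (F : Type*) [Field F] {ι : Type*} (sw : ι → ι) (p : ZMod 2) :
    Submodule F (Matrix ι ι F) where
  carrier := {X | ∀ a b, X (sw a) (sw b) = (if p = 0 then 1 else -1) * X a b}
  add_mem' := by
    intro X Y hX hY a b
    simp only [Matrix.add_apply, hX a b, hY a b, mul_add]
  zero_mem' := by intro a b; simp
  smul_mem' := by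
    intro c X hX a b
    simp only [Matrix.smul_apply, hX a b, smul_eq_mul]
    ring

/-- The supertranspose `X ↦ X^τ = [[Aᵗ, Cᵗ], [-Bᵗ, Dᵗ]]`, for a general parity
function `π` on the matrix indices. -/
def tauL (F : Type*) [Field F] {ι : Type*} (π : ι → ZMod 2) :
    Matrix ι ι F →ₗ[F] Matrix ι ι F where
  toFun X := fun a b => (if π a = 1 ∧ π b = 0 then (-1 : F) else 1) * X b a
  map_add' X Y := by funext a b; exact mul_add _ (X b a) (Y b a)
  map_smul' c X := by
    funext a b
    exact mul_left_comm _ c (X b a)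

lemma exists_parity_alg {F : Type*} [Field F] (hchar : (2 : F) ≠ 0)
    {R : Type*} [Ring R] [Algebra F R]
    (S : ZMod 2 → Submodule F R) (hS : IsSuperGrading F S) :
    ∃ φ : R ≃ₐ[F] R, (∀ x, φ (φ x) = x) ∧ (∀ x, x ∈ S 0 ↔ φ x = x) ∧
      (∀ x, x ∈ S 1 ↔ φ x = -x) := by
  have hc : IsCompl (S 0) (S 1) := by
    refine (DirectSum.isInternal_submodule_iff_isCompl S (by decide) ?_).1 hS.internal
    ext i
    have : ∀ i : ZMod 2, i = 0 ∨ i = 1 := by decide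
    simpa using this i
  have key : ∀ x : R, ∃ a ∈ S 0, ∃ b ∈ S 1, a + b = x := fun x => by
    have : x ∈ S 0 ⊔ S 1 := by rw [hc.sup_eq_top]; trivial
    exact Submodule.mem_sup.1 this
  let ψ : R →ₗ[F] R := LinearMap.ofIsCompl hc (S 0).subtype (-(S 1).subtype)
  have h0 : ∀ x ∈ S 0, ψ x = x := fun x hx => by
    have := LinearMap.ofIsCompl_apply_left hc (φ := (S 0).subtype) (ψ := -(S 1).subtype) ⟨x, hx⟩
    simpa using this
  have h1 : ∀ x ∈ S 1, ψ x = -x := fun x hx => by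
    have := LinearMap.ofIsCompl_apply_right hc (φ := (S 0).subtype) (ψ := -(S 1).subtype) ⟨x, hx⟩
    simpa using this
  have hinv : ∀ x, ψ (ψ x) = x := fun x => by
    obtain ⟨a, ha, b, hb, rfl⟩ := key x
    simp [h0 a ha, h1 b hb]
  have hmul : ∀ x y, ψ (x * y) = ψ x * ψ y := fun x y => by
    obtain ⟨a, ha, b, hb, rfl⟩ := key x
    obtain ⟨c, hc, d, hd, rfl⟩ := key y
    have e1 := h0 _ (by simpa using hS.mul_mem ha hc)
    have e2 := h1 _ (by simpa using hS.mul_mem ha hd)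
    have e3 := h1 _ (by simpa using hS.mul_mem hb hc)
    have e4 := h0 _ (by simpa [show (1 + 1 : ZMod 2) = 0 from rfl] using hS.mul_mem hb hd)
    simp only [add_mul, mul_add, map_add, e1, e2, e3, e4, h0 a ha, h1 b hb, h0 c hc, h1 d hd]
    noncomm_ring
  have hone : ψ 1 = 1 := by
    have := hmul (ψ 1) 1
    rw [mul_one, hinv, one_mul] at this
    exact this.symm
  let f : R →ₐ[F] R := AlgHom.ofLinearMap ψ hone hmul
  have hf : ∀ x, f x = ψ x := fun _ => rfl
  refine ⟨AlgEquiv.ofAlgHom f f (by ext x; simp [hf, hinv]) (by ext x; simp [hf, hinv]), ?_, ?_, ?_⟩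
  · intro x; simp [hf, hinv]
  · intro x
    refine ⟨fun hx => by simp [hf, h0 x hx], fun hx => ?_⟩
    obtain ⟨a, ha, b, hb, rfl⟩ := key x
    simp only [AlgEquiv.ofAlgHom_apply, hf, map_add, h0 a ha, h1 b hb] at hx
    have h2 : (2 : F) • b = 0 := by
      rw [two_smul]; exact add_eq_zero_iff_eq_neg.2 (add_left_cancel hx).symm
    rw [(smul_eq_zero.1 h2).resolve_left hchar, add_zero]; exact ha
  · intro x
    refine ⟨fun hx => by simp [hf, h1 x hx], fun hx => ?_⟩
    obtain ⟨a, ha, b, hb, rfl⟩ := key x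
    simp only [AlgEquiv.ofAlgHom_apply, hf, map_add, h0 a ha, h1 b hb, neg_add] at hx
    have h2 : (2 : F) • a = 0 := by
      rw [two_smul]; exact add_eq_zero_iff_eq_neg.2 (add_right_cancel hx)
    rw [(smul_eq_zero.1 h2).resolve_left hchar, zero_add]; exact hb

lemma exists_conj {F : Type*} [Field F] [IsAlgClosed F] {N : ℕ} (hN : 0 < N)
    (φ : Matrix (Fin N) (Fin N) F ≃ₐ[F] Matrix (Fin N) (Fin N) F) (hφ : ∀ x, φ (φ x) = x) :
    ∃ T : Matrix (Fin N) (Fin N) F, T * T = 1 ∧ ∀ X, φ X = T * X * T := by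
  obtain ⟨L, hL⟩ := AlgEquiv.eq_linearEquivConjAlgEquiv
    ((Matrix.toLinAlgEquiv'.symm.trans φ).trans (Matrix.toLinAlgEquiv' (R := F) (n := Fin N)))
  set T : Matrix (Fin N) (Fin N) F := LinearMap.toMatrixAlgEquiv' (L : (Fin N → F) →ₗ[F] (Fin N → F)) with hT
  set T' : Matrix (Fin N) (Fin N) F := LinearMap.toMatrixAlgEquiv' (L.symm : (Fin N → F) →ₗ[F] (Fin N → F)) with hT'
  have hTT' : T * T' = 1 := by
    rw [hT, hT', ← map_mul]
    convert map_one (LinearMap.toMatrixAlgEquiv' (R := F) (n := Fin N))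
    ext; simp
  have hT'T : T' * T = 1 := by
    rw [hT, hT', ← map_mul]
    convert map_one (LinearMap.toMatrixAlgEquiv' (R := F) (n := Fin N))
    ext; simp
  have hconj : ∀ X, φ X = T * X * T' := by
    intro X
    have := congrArg (fun f => LinearMap.toMatrixAlgEquiv' (f (Matrix.toLinAlgEquiv' X))) hL
    simp only [AlgEquiv.trans_apply] at this
    rw [LinearMap.toMatrixAlgEquiv'_toLinAlgEquiv'] at this
    rw [show Matrix.toLinAlgEquiv'.symm (Matrix.toLinAlgEquiv' X) = X from
      AlgEquiv.symm_apply_apply _ _] at this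
    rw [this, hT, hT']
    conv_rhs => rw [← LinearMap.toMatrixAlgEquiv'_toLinAlgEquiv' X]
    rw [← map_mul, ← map_mul]
    congr 1
  have hcomm : ∀ X, (T * T) * X = X * (T * T) := by
    intro X
    have h := hφ X
    rw [hconj, hconj] at h
    calc (T * T) * X = (T * (T * X * T') * T') * (T * T) := by
          simp only [Matrix.mul_assoc]
          rw [← Matrix.mul_assoc T' T T, hT'T, Matrix.one_mul, hT'T, Matrix.mul_one]
      _ = _ := by rw [h]
  obtain ⟨c, hc⟩ := Matrix.mem_range_scalar_of_commute_single (M := T * T)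
    (fun i j _ => (hcomm _).symm)
  obtain ⟨s, hs⟩ := IsAlgClosed.exists_pow_nat_eq c (n := 2) (by norm_num)
  have hc0 : c ≠ 0 := by
    rintro rfl
    have h0 : T * T = 0 := by rw [← hc]; simp
    have : (1 : Matrix (Fin N) (Fin N) F) = 0 := by
      calc (1 : Matrix (Fin N) (Fin N) F) = T' * (T' * (T * T)) := by
            rw [← Matrix.mul_assoc T' T T, hT'T, Matrix.one_mul, hT'T]
        _ = 0 := by rw [h0]; simp
    have := congrFun (congrFun this ⟨0, hN⟩) ⟨0, hN⟩
    simp at this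
  have hs0 : s ≠ 0 := by rintro rfl; exact hc0 (by rw [← hs]; simp)
  have hTTc : T * T = c • (1 : Matrix (Fin N) (Fin N) F) := by
    rw [← hc]; simp [Matrix.smul_one_eq_diagonal]
  have hT'c : T' = c⁻¹ • T := by
    calc T' = c⁻¹ • (T' * (c • 1)) := by simp [smul_smul, hc0]
      _ = _ := by rw [← hTTc, ← Matrix.mul_assoc, hT'T, Matrix.one_mul]
  have hsc : s⁻¹ * s⁻¹ = c⁻¹ := by rw [← hs, pow_two, mul_inv]
  refine ⟨s⁻¹ • T, ?_, fun X => ?_⟩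
  · rw [Matrix.smul_mul, Matrix.mul_smul, smul_smul, hsc, hTTc, smul_smul, inv_mul_cancel₀ hc0, one_smul]
  · rw [hconj, hT'c]
    simp [smul_smul, hsc]

lemma exists_homogeneous {F : Type*} [Field F] {G : Type*} [CommGroup G] {N : ℕ} (hN : 0 < N)
    (t : Fin N → G) (T : Matrix (Fin N) (Fin N) F) (hT : T * T = 1)
    (hgr : ∀ g X, X ∈ elemGrading F t g → T * X * T ∈ elemGrading F t g) :
    ∃ h : G, h ^ 2 = 1 ∧ ∀ a b, T a b ≠ 0 → t b = t a * h := by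
  have key : ∀ a b c d, T c a ≠ 0 → T b d ≠ 0 → (t c)⁻¹ * t d = (t a)⁻¹ * t b := by
    intro a b c d h1 h2
    by_contra hne
    have hm : Matrix.single a b (1 : F) ∈ elemGrading F t ((t a)⁻¹ * t b) := by
      intro i j hij
      rw [Matrix.single_apply_of_ne]
      rintro ⟨rfl, rfl⟩; exact hij rfl
    have := hgr _ _ hm c d hne
    rw [Matrix.mul_apply, Finset.sum_eq_single b] at this
    · simp [h1, h2] at this
    · intro x _ hx; simp [hx]
    · simp
  have hex : ∃ c a, T c a ≠ 0 := by
    by_contra! hall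
    have h0 : T = 0 := by ext i j; exact hall i j
    rw [h0] at hT
    have := congrFun (congrFun hT ⟨0, hN⟩) ⟨0, hN⟩
    simp at this
  obtain ⟨c, a, hca⟩ := hex
  have e1 := key a c c a hca hca
  refine ⟨(t c)⁻¹ * t a, ?_, fun b d hbd => ?_⟩
  · rw [pow_two]; nth_rw 1 [e1]; simp
  · have e2 := key a b c d hca hbd
    have : t d = t c * ((t a)⁻¹ * t b) := by rw [← e2]; simp
    rw [e1, this]
    rw [mul_left_comm, mul_comm (t b), mul_left_comm, mul_assoc]
    rw [mul_left_comm (t c)]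

lemma transport {F : Type*} [Field F] {G : Type*} [CommGroup G] {N : ℕ}
    {ι : Type*} [Fintype ι] [DecidableEq ι] (b : Module.Basis ι F (Fin N → F))
    (t : Fin N → G) (t' : ι → G) (hb : ∀ x a, b x a ≠ 0 → t a = t' x)
    (T : Matrix (Fin N) (Fin N) F) (T' : Matrix ι ι F)
    (hT' : ∀ x, T.mulVec (b x) = ∑ y, T' y x • b y) :
    ∃ e : Matrix (Fin N) (Fin N) F ≃ₐ[F] Matrix ι ι F,
      (∀ γ, (elemGrading F t γ).map e.toLinearMap = elemGrading F t' γ) ∧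
      ∀ X (c : F), T * X * T = c • X ↔ T' * e X * T' = c • e X := by
  classical
  let P : Matrix (Fin N) ι F := (Pi.basisFun F (Fin N)).toMatrix b
  let Q : Matrix ι (Fin N) F := b.toMatrix (Pi.basisFun F (Fin N))
  have hPQ : P * Q = 1 := Module.Basis.toMatrix_mul_toMatrix_flip _ _
  have hQP : Q * P = 1 := Module.Basis.toMatrix_mul_toMatrix_flip _ _
  have hP : ∀ a x, P a x = b x a := fun a x => by simp [P, Module.Basis.toMatrix_apply]
  have hQ : ∀ x a, Q x a ≠ 0 → t a = t' x := by
    intro x a hxa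
    have h1 : Matrix.diagonal (fun c => if t c = t a then (1 : F) else 0) * P
        = P * Matrix.diagonal (fun y => if t' y = t a then (1 : F) else 0) := by
      ext c y
      rw [Matrix.diagonal_mul, Matrix.mul_diagonal]
      by_cases h : P c y = 0
      · simp [h]
      · have := hb y c (by rwa [← hP])
        simp [this]
    have h2 : Q * Matrix.diagonal (fun c => if t c = t a then (1 : F) else 0)
        = Matrix.diagonal (fun y => if t' y = t a then (1 : F) else 0) * Q := by
      calc _ = Q * (Matrix.diagonal (fun c => if t c = t a then (1 : F) else 0) * P) * Q := by
            rw [Matrix.mul_assoc, Matrix.mul_assoc, hPQ, Matrix.mul_one]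
        _ = _ := by rw [h1, ← Matrix.mul_assoc, hQP, Matrix.one_mul]
    have h3 := congrFun (congrFun h2 x) a
    rw [Matrix.diagonal_mul, Matrix.mul_diagonal] at h3
    by_contra hne
    simp [Ne.symm hne, hxa] at h3
  let f : Matrix (Fin N) (Fin N) F →ₗ[F] Matrix ι ι F :=
    { toFun := fun X => Q * X * P
      map_add' := fun X Y => by simp [Matrix.mul_add, Matrix.add_mul]
      map_smul' := fun c X => by simp }
  let f' : Matrix ι ι F →ₗ[F] Matrix (Fin N) (Fin N) F :=
    { toFun := fun X => P * X * Q
      map_add' := fun X Y => by simp [Matrix.mul_add, Matrix.add_mul]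
      map_smul' := fun c X => by simp }
  have hff' : ∀ Y : Matrix ι ι F, Q * (P * Y * Q) * P = Y := fun Y => by
    rw [Matrix.mul_assoc, Matrix.mul_assoc, hQP, Matrix.mul_one, ← Matrix.mul_assoc, hQP,
      Matrix.one_mul]
  have hf'f : ∀ Y : Matrix (Fin N) (Fin N) F, P * (Q * Y * P) * Q = Y := fun Y => by
    rw [Matrix.mul_assoc, Matrix.mul_assoc, hPQ, Matrix.mul_one, ← Matrix.mul_assoc, hPQ,
      Matrix.one_mul]
  let e : Matrix (Fin N) (Fin N) F ≃ₐ[F] Matrix ι ι F := AlgEquiv.ofLinearEquiv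
    (LinearEquiv.ofLinearMap f f' (LinearMap.ext hff') (LinearMap.ext hf'f))
    (by show Q * (1 : Matrix (Fin N) (Fin N) F) * P = 1; rw [Matrix.mul_one, hQP])
    (fun X Y => by
      show Q * (X * Y) * P = (Q * X * P) * (Q * Y * P)
      simp only [Matrix.mul_assoc]
      rw [← Matrix.mul_assoc P Q, hPQ, Matrix.one_mul])
  have he : ∀ X, e X = Q * X * P := fun _ => rfl
  have hTP : T * P = P * T' := by
    ext a x
    have := congrFun (hT' x) a
    simp only [Finset.sum_apply, Pi.smul_apply, smul_eq_mul] at this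
    rw [Matrix.mul_apply, Matrix.mul_apply]
    simp only [hP]
    rw [Matrix.mulVec, dotProduct] at this
    rw [this]
    exact Finset.sum_congr rfl fun y _ => mul_comm _ _
  have hTT : T' = e T := by
    rw [he, Matrix.mul_assoc, hTP, ← Matrix.mul_assoc, hQP, Matrix.one_mul]
  refine ⟨e, fun γ => ?_, fun X c => ?_⟩
  · ext Y
    constructor
    · rintro ⟨X, hX, rfl⟩ x y hxy
      show (Q * X * P) x y = 0
      rw [Matrix.mul_apply]
      refine Finset.sum_eq_zero fun d _ => ?_
      rw [Matrix.mul_apply, Finset.sum_mul]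
      refine Finset.sum_eq_zero fun c _ => ?_
      by_cases h1 : Q x c = 0
      · simp [h1]
      by_cases h2 : P d y = 0
      · simp [h2]
      rw [hX c d, mul_zero, zero_mul]
      rw [hQ x c h1, hb y d (by rwa [← hP])]
      exact hxy
    · intro hY
      refine ⟨P * Y * Q, ?_, hff' Y⟩
      intro c d hcd
      rw [Matrix.mul_apply]
      refine Finset.sum_eq_zero fun y _ => ?_
      rw [Matrix.mul_apply, Finset.sum_mul]
      refine Finset.sum_eq_zero fun x _ => ?_
      by_cases h1 : P c x = 0
      · simp [h1]
      by_cases h2 : Q y d = 0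
      · simp [h2]
      rw [hY x y, mul_zero, zero_mul]
      rw [← hQ y d h2, ← hb x c (by rwa [← hP])]
      exact hcd
  · rw [hTT, ← map_mul, ← map_mul, ← map_smul, e.injective.eq_iff]

lemma isInternal_of_proj {F : Type*} [Field F] {V : Type*} [AddCommGroup V] [Module F V]
    {I : Type*} [Fintype I] [DecidableEq I] (W : I → Submodule F V) (π : I → V →ₗ[F] V)
    (hmem : ∀ i v, π i v ∈ W i) (hsum : ∀ v, ∑ i, π i v = v)
    (hid : ∀ i, ∀ v ∈ W i, π i v = v) (hz : ∀ i j, i ≠ j → ∀ v ∈ W j, π i v = 0) :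
    DirectSum.IsInternal W := by
  rw [DirectSum.isInternal_submodule_iff_iSupIndep_and_iSup_eq_top]
  constructor
  · intro i
    rw [Submodule.disjoint_def]
    intro x hx hx'
    have : (⨆ j, ⨆ (_ : j ≠ i), W j) ≤ LinearMap.ker (π i) :=
      iSup₂_le fun j hj v hv => hz i j hj.symm v hv
    rw [← hid i x hx]
    exact this hx'
  · rw [eq_top_iff]
    intro v _
    rw [← hsum v]
    exact Submodule.sum_mem _ fun i _ => Submodule.mem_iSup_of_mem i (hmem i v)

def sigmaBoolEquiv {r : ℕ} (κ : Fin r × Bool → ℕ) :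
    (Σ i : Fin r × Bool, Fin (κ i)) ≃
      Σ i : Fin r, (Fin (κ (i, false)) ⊕ Fin (κ (i, true))) where
  toFun
    | ⟨(i, false), j⟩ => ⟨i, Sum.inl j⟩
    | ⟨(i, true), j⟩ => ⟨i, Sum.inr j⟩
  invFun
    | ⟨i, Sum.inl j⟩ => ⟨(i, false), j⟩
    | ⟨i, Sum.inr j⟩ => ⟨(i, true), j⟩
  left_inv := by rintro ⟨⟨i, _ | _⟩, j⟩ <;> rfl
  right_inv := by rintro ⟨i, j | j⟩ <;> rfl

lemma exists_basis {F : Type*} [Field F] {V : Type*} [AddCommGroup V] [Module F V]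
    {r : ℕ} (W : Fin r × Bool → Submodule F V) (hW : DirectSum.IsInternal W)
    (κ : Fin r × Bool → ℕ) (v : ∀ i, Module.Basis (Fin (κ i)) F (W i)) :
    ∃ b : Module.Basis (Σ i : Fin r, (Fin (κ (i, false)) ⊕ Fin (κ (i, true)))) F V,
      (∀ i j, b ⟨i, Sum.inl j⟩ = v (i, false) j) ∧ (∀ i j, b ⟨i, Sum.inr j⟩ = v (i, true) j) := by
  refine ⟨(hW.collectedBasis v).reindex (sigmaBoolEquiv κ), fun i j => ?_, fun i j => ?_⟩
  · rw [Module.Basis.reindex_apply, DirectSum.IsInternal.collectedBasis_coe]; rfl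
  · rw [Module.Basis.reindex_apply, DirectSum.IsInternal.collectedBasis_coe]; rfl

/-- The sign attached to a Boolean. -/
def bsign (F : Type*) [Field F] (ε : Bool) : F := if ε then -1 else 1

lemma caseA {F : Type*} [Field F] (hchar : (2 : F) ≠ 0)
    {G : Type*} [CommGroup G] [DecidableEq G] {N r : ℕ} (σ : Fin r ≃ G)
    (t : Fin N → G) (T : Matrix (Fin N) (Fin N) F) (hTT : T * T = 1)
    (hT : ∀ a b, T a b ≠ 0 → t b = t a) :
    ∃ (p q : Fin r → ℕ) (b : Module.Basis (Σ i : Fin r, (Fin (p i) ⊕ Fin (q i))) F (Fin N → F)),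
      (∀ x a, b x a ≠ 0 → t a = σ x.1) ∧
      (∀ x, T.mulVec (b x) = (Sum.elim (fun _ => (1 : F)) (fun _ => -1) x.2) • b x) := by
  let W : Fin r × Bool → Submodule F (Fin N → F) := fun i =>
    { carrier := {v | (∀ a, t a ≠ σ i.1 → v a = 0) ∧ T.mulVec v = bsign F i.2 • v}
      zero_mem' := by simp
      add_mem' := by
        rintro u v ⟨hu, hu'⟩ ⟨hv, hv'⟩
        exact ⟨fun a ha => by simp [hu a ha, hv a ha], by
          rw [Matrix.mulVec_add, hu', hv', smul_add]⟩
      smul_mem' := by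
        rintro c v ⟨hv, hv'⟩
        exact ⟨fun a ha => by simp [hv a ha], by rw [Matrix.mulVec_smul, hv', smul_comm]⟩ }
  have hWm : ∀ i v, v ∈ W i ↔ (∀ a, t a ≠ σ i.1 → v a = 0) ∧ T.mulVec v = bsign F i.2 • v :=
    fun _ _ => Iff.rfl
  let D : Fin r → (Fin N → F) →ₗ[F] (Fin N → F) := fun i =>
    { toFun := fun v a => if t a = σ i then v a else 0
      map_add' := fun u v => by ext a; by_cases h : t a = σ i <;> simp [h]
      map_smul' := fun c v => by ext a; by_cases h : t a = σ i <;> simp [h] }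
  have hD : ∀ i v a, D i v a = if t a = σ i then v a else 0 := fun _ _ _ => rfl
  have hDT : ∀ i v a, t a ≠ σ i → T.mulVec (D i v) a = 0 := by
    intro i v a ha
    rw [Matrix.mulVec, dotProduct]
    refine Finset.sum_eq_zero fun c _ => ?_
    by_cases h : T a c = 0
    · simp [h]
    · rw [hD, if_neg (by rw [hT a c h]; exact ha), mul_zero]
  have hTTv : ∀ v : Fin N → F, T.mulVec (T.mulVec v) = v := fun v => by
    rw [Matrix.mulVec_mulVec, hTT, Matrix.one_mulVec]
  let π : Fin r × Bool → (Fin N → F) →ₗ[F] (Fin N → F) := fun i =>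
    (2 : F)⁻¹ • (D i.1 + bsign F i.2 • (T.mulVecLin ∘ₗ D i.1))
  have hπ : ∀ i v, π i v = (2 : F)⁻¹ • (D i.1 v + bsign F i.2 • T.mulVec (D i.1 v)) :=
    fun _ _ => rfl
  have hss : ∀ ε, bsign F ε * bsign F ε = 1 := by intro ε; cases ε <;> simp [bsign]
  have hDid : ∀ i v, (∀ a, t a ≠ σ i → v a = 0) → D i v = v := by
    intro i v hv
    ext a
    rw [hD]
    split_ifs with h
    · rfl
    · exact (hv a h).symm
  have hDz : ∀ i j v, i ≠ j → (∀ a, t a ≠ σ j → v a = 0) → D i v = 0 := by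
    intro i j v hij hv
    ext a
    rw [hD]
    split_ifs with h
    · exact hv a (by rw [h]; exact fun h' => hij (σ.injective h'))
    · rfl
  have hW : DirectSum.IsInternal W := by
    refine isInternal_of_proj W π ?_ ?_ ?_ ?_
    · intro i v
      rw [hWm, hπ]
      refine ⟨fun a ha => ?_, ?_⟩
      · simp [hDT _ _ _ ha, hD, ha]
      · rw [Matrix.mulVec_smul, Matrix.mulVec_add, Matrix.mulVec_smul, hTTv, smul_comm (bsign F i.2),
          smul_add (bsign F i.2), smul_smul (bsign F i.2), hss, one_smul, add_comm]
    · intro v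
      rw [Fintype.sum_prod_type]
      have : ∀ i, ∑ ε, π (i, ε) v = D i v := by
        intro i
        rw [Fintype.sum_bool, hπ, hπ, ← smul_add]
        simp only [bsign]
        rw [inv_smul_eq_iff₀ hchar, two_smul]
        simp
        abel
      simp only [this]
      ext a
      rw [Finset.sum_apply, Finset.sum_eq_single (σ.symm (t a))]
      · simp [hD]
      · intro i _ hi
        rw [hD, if_neg]
        intro h; exact hi (by simp [h])
      · simp
    · rintro i v ⟨hv, hv'⟩
      rw [hπ, hDid _ _ hv, hv', smul_smul, hss, one_smul, inv_smul_eq_iff₀ hchar, two_smul]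
    · rintro ⟨i, ε⟩ ⟨j, δ⟩ hij v ⟨hv, hv'⟩
      rw [hπ]
      by_cases h : i = j
      · subst h
        have hne : ε ≠ δ := fun h => hij (by rw [h])
        rw [hDid _ _ hv, hv']
        cases ε <;> cases δ <;> simp [bsign] at hne ⊢
      · rw [hDz _ _ _ h hv]; simp
  obtain ⟨b, hb1, hb2⟩ := exists_basis W hW (fun i => Module.finrank F (W i))
    (fun i => Module.finBasis F (W i))
  refine ⟨_, _, b, ?_, ?_⟩
  · rintro ⟨i, j | j⟩ a h <;> by_contra hne
    · rw [hb1] at h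
      exact h (((hWm _ _).1 (Module.finBasis F (W (i, false)) j).2).1 a hne)
    · rw [hb2] at h
      exact h (((hWm _ _).1 (Module.finBasis F (W (i, true)) j).2).1 a hne)
  · rintro ⟨i, j | j⟩
    · rw [hb1]
      exact ((hWm _ _).1 (Module.finBasis F (W (i, false)) j).2).2
    · rw [hb2]
      exact ((hWm _ _).1 (Module.finBasis F (W (i, true)) j).2).2

lemma caseQ {F : Type*} [Field F]
    {G : Type*} [CommGroup G] [DecidableEq G] {N r : ℕ} (σ : Fin r ≃ G)
    (t : Fin N → G) (T : Matrix (Fin N) (Fin N) F) (hTT : T * T = 1) (h : G) (h1 : h ≠ 1)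
    (h2 : h ^ 2 = 1) (hT : ∀ a b, T a b ≠ 0 → t b = t a * h) :
    ∃ (k : Fin r → ℕ) (b : Module.Basis (Σ i : Fin r, (Fin (k i) ⊕ Fin (k i))) F (Fin N → F)),
      (∀ x a, b x a ≠ 0 → t a = Sum.elim (fun _ => σ x.1) (fun _ => σ x.1 * h) x.2) ∧
      (∀ x, T.mulVec (b x) = b ⟨x.1, x.2.swap⟩) := by
  have hhh : h * h = 1 := by rw [← pow_two, h2]
  have hgh : ∀ g : G, g * h * h = g := fun g => by rw [mul_assoc, hhh, mul_one]
  let k : Fin N → Fin r × Bool := fun a =>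
    if σ.symm (t a) < σ.symm (t a * h) then (σ.symm (t a), false) else (σ.symm (t a * h), true)
  have hkf : ∀ a i, k a = (i, false) → t a = σ i := by
    intro a i hk
    simp only [k] at hk
    split_ifs at hk
    · simp only [Prod.mk.injEq, and_true] at hk
      simp [← hk]
    · simp at hk
  have hkt : ∀ a i, k a = (i, true) → t a = σ i * h := by
    intro a i hk
    simp only [k] at hk
    split_ifs at hk
    · simp at hk
    · simp only [Prod.mk.injEq, and_true] at hk
      simp [← hk, hgh]
  have hkT : ∀ a b, T a b ≠ 0 → k b = ((k a).1, !(k a).2) := by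
    intro a b hab
    have hb := hT a b hab
    have hne : σ.symm (t a) ≠ σ.symm (t a * h) := by
      intro h'
      have := σ.symm.injective h'
      exact h1 (by simpa using this.symm)
    simp only [k, hb, hgh]
    rcases lt_or_gt_of_ne hne with hlt | hlt
    · rw [if_pos hlt, if_neg (not_lt.2 hlt.le)]; rfl
    · rw [if_neg (not_lt.2 hlt.le), if_pos hlt]; rfl
  let W : Fin r × Bool → Submodule F (Fin N → F) := fun i =>
    { carrier := {v | ∀ a, k a ≠ i → v a = 0}
      zero_mem' := by simp
      add_mem' := fun {u v} hu hv a ha => by simp [hu a ha, hv a ha]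
      smul_mem' := fun c v hv a ha => by simp [hv a ha] }
  have hWm : ∀ i v, v ∈ W i ↔ ∀ a, k a ≠ i → v a = 0 := fun _ _ => Iff.rfl
  let π : Fin r × Bool → (Fin N → F) →ₗ[F] (Fin N → F) := fun i =>
    { toFun := fun v a => if k a = i then v a else 0
      map_add' := fun u v => by ext a; by_cases h : k a = i <;> simp [h]
      map_smul' := fun c v => by ext a; by_cases h : k a = i <;> simp [h] }
  have hπ : ∀ i v a, π i v a = if k a = i then v a else 0 := fun _ _ _ => rfl
  have hW : DirectSum.IsInternal W := by
    refine isInternal_of_proj W π ?_ ?_ ?_ ?_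
    · intro i v a ha
      rw [hπ, if_neg ha]
    · intro v
      ext a
      simp [Finset.sum_apply, hπ]
    · intro i v hv
      ext a
      rw [hπ]
      split_ifs with h
      · rfl
      · exact (hv a h).symm
    · intro i j hij v hv
      ext a
      rw [hπ]
      split_ifs with h
      · exact hv a (by rw [h]; exact hij)
      · rfl
  have hTTv : ∀ v : Fin N → F, T.mulVec (T.mulVec v) = v := fun v => by
    rw [Matrix.mulVec_mulVec, hTT, Matrix.one_mulVec]
  have hTW : ∀ i ε, ∀ v ∈ W (i, ε), T.mulVec v ∈ W (i, !ε) := by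
    intro i ε v hv a ha
    rw [Matrix.mulVec, dotProduct]
    refine Finset.sum_eq_zero fun c _ => ?_
    by_cases hac : T a c = 0
    · simp [hac]
    · rw [hv c, mul_zero]
      rw [hkT a c hac]
      intro h'
      apply ha
      simp only [Prod.mk.injEq] at h'
      ext1
      · exact h'.1
      · simp [← h'.2]
  let E : ∀ i, W (i, false) ≃ₗ[F] W (i, true) := fun i =>
    LinearEquiv.ofLinearMap (T.mulVecLin.restrict (hTW i false)) (T.mulVecLin.restrict (hTW i true))
      (by ext1 v; exact Subtype.ext (hTTv v)) (by ext1 v; exact Subtype.ext (hTTv v))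
  let κ : Fin r × Bool → ℕ := fun i => Module.finrank F (W (i.1, false))
  let v : ∀ i, Module.Basis (Fin (κ i)) F (W i) := fun
    | (i, false) => Module.finBasis F (W (i, false))
    | (i, true) => (Module.finBasis F (W (i, false))).map (E i)
  obtain ⟨b, hb1, hb2⟩ := exists_basis W hW κ v
  have hTb : ∀ i j, T.mulVec (b ⟨i, Sum.inl j⟩) = b ⟨i, Sum.inr j⟩ := by
    intro i j
    rw [hb1, hb2]
    simp only [v, Module.Basis.map_apply]
    rfl
  refine ⟨fun i => κ (i, false), b, ?_, ?_⟩
  · rintro ⟨i, j | j⟩ a hne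
    · rw [hb1] at hne
      apply hkf
      by_contra hk
      exact hne ((v (i, false) j).2 a hk)
    · erw [hb2] at hne
      apply hkt
      by_contra hk
      exact hne ((v (i, true) j).2 a hk)
  · rintro ⟨i, j | j⟩
    · exact hTb i j
    · have := hTTv (b ⟨i, Sum.inl j⟩)
      rw [hTb] at this
      exact this

/-- **Theorem (Bahturin–Shestakov).** Let `G` be a finite abelian group, `F` an
algebraically closed field of characteristic `≠ 2`, and `R` a `G`-graded
finite-dimensional associative superalgebra which is simple as an associative algebra
(hence a matrix algebra `M_N(F)`), whose `G`-grading is elementary.  Then, as a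
`G`-graded superalgebra, `R` is isomorphic to a superalgebra of type `A(θ; p̄)`
or of type `Q(θ; h)`. -/
theorem elementary_graded_matrix_superalgebra_classification
    (F : Type*) [Field F] [IsAlgClosed F] (hchar : (2 : F) ≠ 0)
    (G : Type*) [CommGroup G] [Fintype G] [DecidableEq G]
    (N : ℕ) (hN : 0 < N)
    (S : ZMod 2 → Submodule F (Matrix (Fin N) (Fin N) F)) (hS : IsSuperGrading F S)
    (A : G → Submodule F (Matrix (Fin N) (Fin N) F)) (hA : IsAlgGrading F G A)
    (helem : ∃ t : Fin N → G, ∀ g, A g = elemGrading F t g)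
    (hcompat : SuperCompatible F A S) :
    -- type `A(θ; p̄)`
    (∃ (r : ℕ) (p q : Fin r → ℕ) (g : Fin r → G), Function.Injective g ∧
      ∃ e : Matrix (Fin N) (Fin N) F ≃ₐ[F]
          Matrix (Σ i : Fin r, (Fin (p i) ⊕ Fin (q i)))
            (Σ i : Fin r, (Fin (p i) ⊕ Fin (q i))) F,
        (∀ γ : G, (A γ).map e.toLinearMap = elemGrading F (fun x => g x.1) γ) ∧
        (∀ π : ZMod 2, (S π).map e.toLinearMap
          = parSuper F (fun x : (Σ i : Fin r, (Fin (p i) ⊕ Fin (q i))) =>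
              Sum.elim (fun _ => (0 : ZMod 2)) (fun _ => 1) x.2) π)) ∨
    -- type `Q(θ; h)`
    (∃ (r : ℕ) (k : Fin r → ℕ) (g : Fin r → G) (h : G),
      Function.Injective g ∧ h ≠ 1 ∧ h ^ 2 = 1 ∧
      ∃ e : Matrix (Fin N) (Fin N) F ≃ₐ[F]
          Matrix (Σ i : Fin r, (Fin (k i) ⊕ Fin (k i)))
            (Σ i : Fin r, (Fin (k i) ⊕ Fin (k i))) F,
        (∀ γ : G, (A γ).map e.toLinearMap
          = elemGrading F (fun x : (Σ i : Fin r, (Fin (k i) ⊕ Fin (k i))) =>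
              Sum.elim (fun _ => g x.1) (fun _ => g x.1 * h) x.2) γ) ∧
        (∀ π : ZMod 2, (S π).map e.toLinearMap
          = swSuper F (fun x : (Σ i : Fin r, (Fin (k i) ⊕ Fin (k i))) =>
              ⟨x.1, x.2.swap⟩) π)) := by
  obtain ⟨t, ht⟩ := helem
  obtain rfl : A = elemGrading F t := funext ht
  obtain ⟨φ, hφφ, hφ0, hφ1⟩ := exists_parity_alg hchar S hS
  obtain ⟨T, hTT, hφT⟩ := exists_conj hN φ hφφ
  have hSm : ∀ p X, X ∈ S p ↔ T * X * T = (if p = 0 then (1 : F) else -1) • X := by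
    intro p X
    have hp : ∀ p : ZMod 2, p = 0 ∨ p = 1 := by decide
    rcases hp p with rfl | rfl
    · rw [hφ0, hφT]; simp
    · rw [hφ1, hφT]; simp
  have hgr : ∀ g X, X ∈ elemGrading F t g → T * X * T ∈ elemGrading F t g := by
    intro g X hX
    rw [← hφT]
    have hX' := hX
    rw [hcompat g] at hX'
    obtain ⟨u, hu, v, hv, rfl⟩ := Submodule.mem_sup.1 hX'
    rw [map_add, (hφ0 u).1 hu.2, (hφ1 v).1 hv.2]
    exact Submodule.add_mem _ hu.1 (Submodule.neg_mem _ hv.1)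
  obtain ⟨h, hh2, hTh⟩ := exists_homogeneous hN t T hTT hgr
  let σ : Fin (Fintype.card G) ≃ G := (Fintype.equivFin G).symm
  by_cases hh : h = 1
  · left
    subst hh
    obtain ⟨p, q, b, hb, hTb⟩ := caseA hchar σ t T hTT (fun a b hab => by simpa using hTh a b hab)
    refine ⟨_, p, q, σ, σ.injective, ?_⟩
    obtain ⟨e, he, heT⟩ := transport b t (fun x => σ x.1) hb T
      (Matrix.diagonal fun x => Sum.elim (fun _ => (1 : F)) (fun _ => -1) x.2) (by
        intro x
        rw [hTb, Finset.sum_eq_single x]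
        · simp
        · intro y _ hy; simp [hy]
        · simp)
    refine ⟨e, he, fun π => ?_⟩
    have key : ∀ Y : Matrix (Σ i, (Fin (p i) ⊕ Fin (q i))) (Σ i, (Fin (p i) ⊕ Fin (q i))) F,
        Y ∈ (S π).map e.toLinearMap ↔
        Y ∈ parSuper F (fun x : (Σ i, (Fin (p i) ⊕ Fin (q i))) =>
              Sum.elim (fun _ => (0 : ZMod 2)) (fun _ => 1) x.2) π := by
      intro Y
      obtain ⟨X, rfl⟩ := e.surjective Y
      have h1 : e X ∈ (S π).map e.toLinearMap ↔ X ∈ S π := by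
        constructor
        · rintro ⟨X', hX', h'⟩
          rwa [← e.injective h']
        · exact fun hX => ⟨X, hX, rfl⟩
      rw [h1, hSm, heT]
      generalize e X = Y
      have hne : ∀ y : F, y = -y → y = 0 := fun y hy => by
        have : (2 : F) * y = 0 := by rw [two_mul]; exact add_eq_zero_iff_eq_neg.2 hy
        exact (mul_eq_zero.1 this).resolve_left hchar
      have hne' : ∀ y : F, -y = y → y = 0 := fun y hy => hne y hy.symm
      have hp : ∀ p : ZMod 2, p = 0 ∨ p = 1 := by decide
      have h11 : (1 + 1 : ZMod 2) = 0 := rfl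
      constructor
      · rintro hY ⟨i, x⟩ ⟨j, y⟩ hxy
        have := congrFun (congrFun hY ⟨i, x⟩) ⟨j, y⟩
        rw [Matrix.mul_diagonal, Matrix.diagonal_mul, Matrix.smul_apply] at this
        rcases hp π with rfl | rfl <;> rcases x with x | x <;> rcases y with y | y <;>
          simp [h11] at hxy this <;> first | exact hne _ this | exact hne' _ this
      · intro hY
        ext ⟨i, x⟩ ⟨j, y⟩
        have := hY ⟨i, x⟩ ⟨j, y⟩
        rw [Matrix.mul_diagonal, Matrix.diagonal_mul, Matrix.smul_apply]
        rcases hp π with rfl | rfl <;> rcases x with x | x <;> rcases y with y | y <;>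
          simp [h11] at this ⊢ <;> simp [this]
    exact Submodule.ext key
  · right
    obtain ⟨k, b, hb, hTb⟩ := caseQ σ t T hTT h hh hh2 hTh
    refine ⟨_, k, σ, h, σ.injective, hh, hh2, ?_⟩
    let sw : (Σ i, (Fin (k i) ⊕ Fin (k i))) → (Σ i, (Fin (k i) ⊕ Fin (k i))) :=
      fun x => ⟨x.1, x.2.swap⟩
    have hsw : ∀ x, sw (sw x) = x := by rintro ⟨i, x⟩; simp [sw]
    let T' : Matrix (Σ i, (Fin (k i) ⊕ Fin (k i))) (Σ i, (Fin (k i) ⊕ Fin (k i))) F :=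
      fun y x => if y = sw x then 1 else 0
    obtain ⟨e, he, heT⟩ := transport b t (fun x : (Σ i, (Fin (k i) ⊕ Fin (k i))) =>
      Sum.elim (fun _ => σ x.1) (fun _ => σ x.1 * h) x.2) hb T T' (by
        intro x
        rw [hTb, Finset.sum_eq_single (sw x)]
        · simp [T', sw]
        · intro y _ hy; simp [T', hy]
        · simp)
    refine ⟨e, he, fun π => ?_⟩
    have hconj : ∀ (Y : Matrix (Σ i, (Fin (k i) ⊕ Fin (k i))) (Σ i, (Fin (k i) ⊕ Fin (k i))) F) x y, (T' * Y * T') x y = Y (sw x) (sw y) := by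
      intro Y x y
      rw [Matrix.mul_apply, Finset.sum_eq_single (sw y)]
      · rw [Matrix.mul_apply, Finset.sum_eq_single (sw x)]
        · simp [T', hsw]
        · intro z _ hz
          have : x ≠ sw z := fun h' => hz (by rw [h', hsw])
          simp [T', this]
        · simp
      · intro z _ hz; simp [T', hz]
      · simp
    have key : ∀ Y : Matrix (Σ i, (Fin (k i) ⊕ Fin (k i))) (Σ i, (Fin (k i) ⊕ Fin (k i))) F,
        Y ∈ (S π).map e.toLinearMap ↔ Y ∈ swSuper F sw π := by
      intro Y
      obtain ⟨X, rfl⟩ := e.surjective Y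
      have h1 : e X ∈ (S π).map e.toLinearMap ↔ X ∈ S π := by
        constructor
        · rintro ⟨X', hX', h'⟩
          rwa [← e.injective h']
        · exact fun hX => ⟨X, hX, rfl⟩
      rw [h1, hSm, heT]
      generalize e X = Y
      constructor
      · intro hY x y
        have h2 := hconj Y x y; rw [hY] at h2; exact h2.symm
      · intro hY
        ext x y
        rw [hconj]
        exact hY x y
    exact Submodule.ext key
end

section
/- Let G be a finite abelian group, h ∈ G an element of order 2, and let R′ = M_{n,n}(F) carry the elementary G-grading defined by the tuple θ′ = (g₁^{(k₁)}, g₃^{(k₃)}, …, g_{2r−1}^{(k_{2r−1})}, g₁h^{(k₁)}, g₃h^{(k₃)}, …, g_{2r−1}h^{(k_{2r−1})}) with pairwise distinct g_i and k₁+k₃+…+k_{2r−1} = n, where in the 2×2 block form A = [[X,Y],[Z,T]] (all blocks n×n) the even part consists of matrices with X = T and Y = Z, and the odd part of matrices with X = −T and Y = −Z. Then, as a G-graded superalgebra, R′ is isomorphic to the superalgebra of type Q(θ;h) with θ = (g₁^{(k₁)}, g₁h^{(k₁)}, …, g_{2r−1}^{(k_{2r−1})}, g_{2r−1}h^{(k_{2r−1})}).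 -/
open scoped TensorProduct

theorem map_elemGrading_reindex (F : Type*) [Field F] {G : Type*} [Group G]
    {ι κ : Type*} [Fintype ι] [DecidableEq ι] [Fintype κ] [DecidableEq κ]
    (σ : ι ≃ κ) (t : ι → G) (u : κ → G) (hu : ∀ a, u (σ a) = t a) (γ : G) :
    (elemGrading F t γ).map (Matrix.reindexAlgEquiv F F σ).toLinearMap = elemGrading F u γ := by
  ext X
  constructor
  · rintro ⟨Y, hY, rfl⟩ a b hab
    refine hY (σ.symm a) (σ.symm b) ?_
    rw [← hu, ← hu, σ.apply_symm_apply, σ.apply_symm_apply]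
    exact hab
  · intro hX
    refine ⟨fun a b => X (σ a) (σ b), ?_, ?_⟩
    · intro a b hab
      refine hX (σ a) (σ b) ?_
      rw [hu, hu]
      exact hab
    · ext a b
      change X (σ (σ.symm a)) (σ (σ.symm b)) = X a b
      rw [σ.apply_symm_apply, σ.apply_symm_apply]

theorem map_swSuper_reindex (F : Type*) [Field F]
    {ι κ : Type*} [Fintype ι] [DecidableEq ι] [Fintype κ] [DecidableEq κ]
    (σ : ι ≃ κ) (s : ι → ι) (u : κ → κ) (hu : ∀ a, u (σ a) = σ (s a)) (p : ZMod 2) :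
    (swSuper F s p).map (Matrix.reindexAlgEquiv F F σ).toLinearMap = swSuper F u p := by
  have hu' : ∀ a, σ.symm (u a) = s (σ.symm a) := by
    intro a
    rw [Equiv.symm_apply_eq, ← hu, σ.apply_symm_apply]
  ext X
  constructor
  · rintro ⟨Y, hY, rfl⟩ a b
    change Y (σ.symm (u a)) (σ.symm (u b)) = _ * Y (σ.symm a) (σ.symm b)
    rw [hu', hu']
    exact hY _ _
  · intro hX
    refine ⟨fun a b => X (σ a) (σ b), ?_, ?_⟩
    · intro a b
      change X (σ (s a)) (σ (s b)) = _ * X (σ a) (σ b)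
      rw [← hu, ← hu]
      exact hX _ _
    · ext a b
      change X (σ (σ.symm a)) (σ (σ.symm b)) = X a b
      rw [σ.apply_symm_apply, σ.apply_symm_apply]

/-- **Lemma.** The matrix superalgebra `M_{n,n}(F)` (rows and columns indexed by
`(Σ i, Fin (k i)) ⊕ (Σ i, Fin (k i))`, with even part the matrices `[[X,Y],[Y,X]]`
and odd part the matrices `[[X,Y],[-Y,-X]]`, i.e. the `Sum.swap`-(anti)invariant ones)
carrying the elementary `G`-grading given by the tuple
`θ' = (g₁^{(k₁)}, …, g_r^{(k_r)}, g₁h^{(k₁)}, …, g_rh^{(k_r)})` with the `g i` pairwise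
distinct and `h` of order 2 is, as a `G`-graded superalgebra, isomorphic to the
superalgebra of type `Q(θ; h)` with
`θ = (g₁^{(k₁)}, g₁h^{(k₁)}, …, g_r^{(k_r)}, g_rh^{(k_r)})`. -/
theorem exampleTwo_iso_typeQ
    (F : Type*) [Field F]
    (G : Type*) [CommGroup G] [Fintype G] [DecidableEq G]
    (r : ℕ) (k : Fin r → ℕ) (g : Fin r → G) (hg : Function.Injective g)
    (h : G) (hh1 : h ≠ 1) (hh2 : h ^ 2 = 1) :
    ∃ e : Matrix ((Σ i : Fin r, Fin (k i)) ⊕ (Σ i : Fin r, Fin (k i)))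
            ((Σ i : Fin r, Fin (k i)) ⊕ (Σ i : Fin r, Fin (k i))) F ≃ₐ[F]
          Matrix (Σ i : Fin r, (Fin (k i) ⊕ Fin (k i)))
            (Σ i : Fin r, (Fin (k i) ⊕ Fin (k i))) F,
      (∀ γ : G,
        (elemGrading F (Sum.elim (fun x : Σ i : Fin r, Fin (k i) => g x.1)
            (fun x : Σ i : Fin r, Fin (k i) => g x.1 * h)) γ).map e.toLinearMap
          = elemGrading F (fun x : (Σ i : Fin r, (Fin (k i) ⊕ Fin (k i))) =>
              Sum.elim (fun _ => g x.1) (fun _ => g x.1 * h) x.2) γ) ∧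
      (∀ π : ZMod 2,
        (swSuper F (Sum.swap :
            (Σ i : Fin r, Fin (k i)) ⊕ (Σ i : Fin r, Fin (k i)) → _) π).map e.toLinearMap
          = swSuper F (fun x : (Σ i : Fin r, (Fin (k i) ⊕ Fin (k i))) =>
              ⟨x.1, x.2.swap⟩) π) := by
  refine ⟨Matrix.reindexAlgEquiv F F
    (Equiv.sigmaSumDistrib (fun i : Fin r => Fin (k i)) (fun i : Fin r => Fin (k i))).symm,
    fun γ => ?_, fun π => ?_⟩
  · apply map_elemGrading_reindex
    rintro (⟨i, a⟩ | ⟨i, a⟩) <;> rfl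
  · apply map_swSuper_reindex
    rintro (⟨i, a⟩ | ⟨i, a⟩) <;> rfl
end

section
/- Let R = M_n(F) be a G-graded matrix algebra over an algebraically closed field of characteristic zero, where G is a finite group. Then dim R_e ≥ 1, where e is the identity of G. Moreover, dim R_e = 1 if and only if the G-grading is fine. -/
open scoped TensorProduct

lemma aux_trace_mulLeft {F : Type*} [Field F] (n : ℕ) (z : Matrix (Fin n) (Fin n) F) :
    LinearMap.trace F _ (LinearMap.mulLeft F z) = n * z.trace := by
  rw [LinearMap.trace_eq_matrix_trace F (Matrix.stdBasis F (Fin n) (Fin n))]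
  simp only [Matrix.trace, Matrix.diag_apply, LinearMap.toMatrix_apply,
    Fintype.sum_prod_type, Matrix.stdBasis_eq_single, LinearMap.mulLeft_apply]
  have h : ∀ i j : Fin n, ((Matrix.stdBasis F (Fin n) (Fin n)).repr
      (z * Matrix.single i j 1)) (i, j) = z i i := by
    intro i j
    have : ∀ M : Matrix (Fin n) (Fin n) F,
      (Matrix.stdBasis F (Fin n) (Fin n)).repr M (i, j) = M i j := by
      intro M
      simp [Matrix.stdBasis]
    rw [this]
    simp
  simp [h, Finset.mul_sum]

lemma aux_sum_exists {F : Type*} [Field F] {G : Type*} [Fintype G] [DecidableEq G]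
    {R : Type*} [Ring R] [Algebra F R] (A : G → Submodule F R)
    (hA : DirectSum.IsInternal A) (x : R) :
    ∃ c : G → R, (∀ g, c g ∈ A g) ∧ x = ∑ g, c g := by
  classical
  letI := hA.chooseDecomposition
  refine ⟨fun g => DirectSum.decompose A x g, fun g => SetLike.coe_mem _, ?_⟩
  conv_lhs => rw [← DirectSum.sum_support_decompose A x]
  apply Finset.sum_subset (Finset.subset_univ _)
  intro g _ hg
  simpa using hg

lemma aux_sum_same {F : Type*} [Field F] {G : Type*} [Fintype G] [DecidableEq G]
    {R : Type*} [Ring R] [Algebra F R] (A : G → Submodule F R)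
    (hA : DirectSum.IsInternal A) (c : G → R) (hc : ∀ g, c g ∈ A g) (h : G)
    (hs : ∑ g, c g ∈ A h) : ∑ g, c g = c h := by
  classical
  letI := hA.chooseDecomposition
  have h1 := DirectSum.decompose_of_mem_same A hs
  rw [← h1, DirectSum.decompose_sum, DFinsupp.finset_sum_apply, AddSubmonoidClass.coe_finset_sum,
    Finset.sum_eq_single h]
  · exact DirectSum.decompose_of_mem_same A (hc h)
  · intro b _ hb
    exact DirectSum.decompose_of_mem_ne A (hc b) hb
  · simp

lemma aux_one_mem {F : Type*} [Field F] {G : Type*} [Group G] [Fintype G] [DecidableEq G]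
    {R : Type*} [Ring R] [Algebra F R] (A : G → Submodule F R)
    (hA : IsAlgGrading F G A) : (1 : R) ∈ A 1 := by
  obtain ⟨c, hc, h1⟩ := aux_sum_exists A hA.internal (1 : R)
  have key : ∀ h, ∀ x ∈ A h, x = x * c 1 := by
    intro h x hx
    have e : x = ∑ g, x * c (h⁻¹ * g) := by
      rw [← Finset.mul_sum, Fintype.sum_equiv (Equiv.mulLeft h⁻¹) (fun g => c (h⁻¹ * g)) c
        (fun _ => rfl), ← h1, mul_one]
    have := aux_sum_same A hA.internal (fun g => x * c (h⁻¹ * g)) (fun g => by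
      have := hA.mul_mem hx (hc (h⁻¹ * g))
      simpa using this) h (by rw [← e]; exact hx)
    rw [← e] at this
    simpa using this
  have : (1 : R) = 1 * c 1 := by
    conv_rhs => rw [h1, Finset.sum_mul]
    conv_lhs => rw [h1]
    exact Finset.sum_congr rfl fun g _ => key g _ (hc g)
  rw [this, one_mul]
  exact hc 1

theorem identity_component_dim_and_fine
    (F : Type*) [Field F] [IsAlgClosed F] [CharZero F]
    (G : Type*) [Group G] [Fintype G] [DecidableEq G]
    (n : ℕ) (hn : 0 < n)
    (A : G → Submodule F (Matrix (Fin n) (Fin n) F))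
    (hA : IsAlgGrading F G A) :
    1 ≤ Module.finrank F (A (1 : G)) ∧
      (Module.finrank F (A (1 : G)) = 1 ↔ IsFineGrading F A) := by
  haveI : Nonempty (Fin n) := ⟨⟨0, hn⟩⟩
  have h1 := aux_one_mem A hA
  have hne : A 1 ≠ ⊥ := by
    intro h
    rw [h, Submodule.mem_bot] at h1
    exact one_ne_zero h1
  refine ⟨Submodule.one_le_finrank_iff.mpr hne, ?_, fun h => h 1 hne⟩
  intro hd g hg
  have hsc : ∀ z ∈ A 1, ∃ a : F, a • (1 : Matrix (Fin n) (Fin n) F) = z := by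
    intro z hz
    obtain ⟨a, ha⟩ := (finrank_eq_one_iff_of_nonzero' (⟨1, h1⟩ : A 1)
      (by simp)).mp hd ⟨z, hz⟩
    exact ⟨a, congrArg Subtype.val ha⟩
  have htr : ∀ k : G, k ≠ 1 → ∀ z ∈ A k, z.trace = 0 := by
    intro k hk z hz
    have := LinearMap.trace_eq_zero_of_mapsTo_ne hA.internal (fun h => k * h)
      (by simpa using hk) (f := LinearMap.mulLeft F z) (fun h y hy => hA.mul_mem hz hy)
    rw [aux_trace_mulLeft] at this
    have hn' : (n : F) ≠ 0 := by exact_mod_cast hn.ne'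
    simpa [hn'] using this
  obtain ⟨x, hx, hx0⟩ := (Submodule.ne_bot_iff _).mp hg
  have hy : ∃ y ∈ A g⁻¹, x * y ≠ 0 := by
    by_contra hcon
    push Not at hcon
    apply hx0
    have ht : ∀ y, (x * y).trace = 0 := by
      intro y
      obtain ⟨c, hc, rfl⟩ := aux_sum_exists A hA.internal y
      rw [Finset.mul_sum, Matrix.trace_sum]
      refine Finset.sum_eq_zero fun h _ => ?_
      by_cases hh : h = g⁻¹
      · subst hh
        rw [hcon _ (hc _), Matrix.trace_zero]
      · refine htr (g * h) (fun e => hh ?_) _ (hA.mul_mem hx (hc h))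
        exact (inv_eq_of_mul_eq_one_right e).symm
    ext i j
    simpa [Matrix.trace_mul_single] using ht (Matrix.single j i 1)
  obtain ⟨y, hy, hxy⟩ := hy
  obtain ⟨a, ha⟩ := hsc (x * y) (by simpa using hA.mul_mem hx hy)
  have ha0 : a ≠ 0 := by rintro rfl; exact hxy (by simpa using ha.symm)
  have hyx : y * x = a • (1 : Matrix (Fin n) (Fin n) F) := by
    have : (a⁻¹ • x) * y = 1 := by
      rw [smul_mul_assoc, ← ha, smul_smul, inv_mul_cancel₀ ha0, one_smul]
    have := mul_eq_one_comm.mp this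
    rw [mul_smul_comm] at this
    rw [← this, smul_smul, mul_inv_cancel₀ ha0, one_smul]
  refine (finrank_eq_one_iff_of_nonzero' (⟨x, hx⟩ : A g)
      (by simpa using hx0)).mpr ?_
  rintro ⟨w, hw⟩
  obtain ⟨b, hb⟩ := hsc (w * y) (by simpa using hA.mul_mem hw hy)
  refine ⟨a⁻¹ * b, Subtype.ext ?_⟩
  change (a⁻¹ * b) • x = w
  have : w * (y * x) = b • x := by rw [← mul_assoc, ← hb]; simp
  rw [hyx] at this
  rw [mul_smul, ← this]
  simp [smul_smul, ha0]
end

section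
/- Any finite-dimensional involution simple associative superalgebra with superinvolution * over an algebraically closed field of characteristic different from 2 is isomorphic to one of the following: (1) R = M_{n,m}(F) with the orthosymplectic or transpose superinvolution; (2) R = M_{n,m}(F) ⊕ M_{n,m}(F)^{sop} with the exchange superinvolution; (3) R = Q(n) ⊕ Q(n)^{sop} with the exchange superinvolution. -/
open scoped TensorProduct

open Matrix


/-- The permutation matrix of a permutation `π`. -/
def permMat (F : Type*) [Field F] {ι : Type*} [DecidableEq ι] (π : Equiv.Perm ι) :
    Matrix ι ι F :=
  fun a b => if π a = b then 1 else 0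

/-- A signed permutation matrix: entry `±1` at `(a, π a)`, the sign given by `sg a`. -/
def signedPermMat (F : Type*) [Field F] {ι : Type*} [DecidableEq ι] (π : Equiv.Perm ι)
    (sg : ι → Bool) : Matrix ι ι F :=
  fun a b => if π a = b then (if sg a then 1 else -1) else 0

/-- The superinvolution `X ↦ Φ⁻¹ X^τ Φ` of the matrix superalgebra `M_{n,m}(F)`
determined by the matrix `Φ`. -/
noncomputable def matStarOfPhi (F : Type*) [Field F] {n m : ℕ}
    (Φ : Matrix (Fin n ⊕ Fin m) (Fin n ⊕ Fin m) F)
    (X : Matrix (Fin n ⊕ Fin m) (Fin n ⊕ Fin m) F) :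
    Matrix (Fin n ⊕ Fin m) (Fin n ⊕ Fin m) F :=
  Φ⁻¹ * tauL F matPar X * Φ

/-- `φ` is a superinvolution of orthosymplectic type on `M_{n,m}(F)`:
`φ X = Φ⁻¹ X^τ Φ` with `Φ = diag(Φ₀, Φ₁)` invertible, `Φ₀` symmetric and
`Φ₁` skew-symmetric. -/
def IsOspType (F : Type*) [Field F] {n m : ℕ}
    (φ : Matrix (Fin n ⊕ Fin m) (Fin n ⊕ Fin m) F →ₗ[F]
      Matrix (Fin n ⊕ Fin m) (Fin n ⊕ Fin m) F) : Prop :=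
  ∃ (Φ₀ : Matrix (Fin n) (Fin n) F) (Φ₁ : Matrix (Fin m) (Fin m) F),
    IsUnit (Matrix.fromBlocks Φ₀ 0 0 Φ₁) ∧ Φ₀ᵀ = Φ₀ ∧ Φ₁ᵀ = -Φ₁ ∧
    ∀ X, φ X = matStarOfPhi F (Matrix.fromBlocks Φ₀ 0 0 Φ₁) X

/-- `φ` is a superinvolution of transpose type on `M_{n,n}(F)`:
`φ X = Φ⁻¹ X^τ Φ` with `Φ = [[0, Φ₀ᵗ], [Φ₀, 0]]` invertible. -/
def IsTrpType (F : Type*) [Field F] {n : ℕ}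
    (φ : Matrix (Fin n ⊕ Fin n) (Fin n ⊕ Fin n) F →ₗ[F]
      Matrix (Fin n ⊕ Fin n) (Fin n ⊕ Fin n) F) : Prop :=
  ∃ Φ₀ : Matrix (Fin n) (Fin n) F,
    IsUnit (Matrix.fromBlocks 0 Φ₀ᵀ Φ₀ 0) ∧
    ∀ X, φ X = matStarOfPhi F (Matrix.fromBlocks 0 Φ₀ᵀ Φ₀ 0) X

/-- The standard symplectic matrix `Q = [[0, I_k], [-I_k, 0]]` on `Fin (2k)`. -/
def stdQ (F : Type*) [Field F] (k : ℕ) : Matrix (Fin (2 * k)) (Fin (2 * k)) F :=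
  fun a b => if (b : ℕ) = (a : ℕ) + k then 1 else if (a : ℕ) = (b : ℕ) + k then -1 else 0

/-- The superinvolution `X ↦ Φ⁻¹ X^τ Φ` of `M_{n,m}(F)`, as a linear map. -/
noncomputable def matStarL (F : Type*) [Field F] {n m : ℕ}
    (Φ : Matrix (Fin n ⊕ Fin m) (Fin n ⊕ Fin m) F) :
    Matrix (Fin n ⊕ Fin m) (Fin n ⊕ Fin m) F →ₗ[F]
      Matrix (Fin n ⊕ Fin m) (Fin n ⊕ Fin m) F where
  toFun X := Φ⁻¹ * tauL F matPar X * Φ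
  map_add' X Y := by
    show Φ⁻¹ * tauL F matPar (X + Y) * Φ = _
    rw [map_add, Matrix.mul_add, Matrix.add_mul]
  map_smul' c X := by
    show Φ⁻¹ * tauL F matPar (c • X) * Φ = _
    rw [LinearMap.map_smul, Matrix.mul_smul, Matrix.smul_mul, RingHom.id_apply]

/-- Projection on the odd part of a matrix superalgebra with index parity `π`. -/
def oddProj (F : Type*) [Field F] {ι : Type*} (π : ι → ZMod 2) :
    Matrix ι ι F →ₗ[F] Matrix ι ι F where
  toFun X := fun a b => if π a + π b = 1 then X a b else 0
  map_add' X Y := by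
    funext a b
    change (if π a + π b = 1 then X a b + Y a b else 0) =
      (if π a + π b = 1 then X a b else 0) + (if π a + π b = 1 then Y a b else 0)
    by_cases h : π a + π b = 1 <;> simp [h]
  map_smul' c X := by
    funext a b
    change (if π a + π b = 1 then c * X a b else 0) =
      c * (if π a + π b = 1 then X a b else 0)
    by_cases h : π a + π b = 1 <;> simp [h]

/-- The super-Jordan product `x ∘ y = ½(xy + (-1)^{|x||y|} yx)` of a superalgebra,
expressed via the projection `odd` onto the odd part: `½(xy + yx) - y₁x₁`. -/
def superJordanMul (F : Type*) [Field F] {A : Type*} [Ring A] [Algebra F A]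
    (odd : A →ₗ[F] A) (x y : A) : A :=
  (2⁻¹ : F) • (x * y + y * x) - odd y * odd x

/-- The super-Lie bracket `[x,y] = xy - (-1)^{|x||y|} yx` of a superalgebra,
expressed via the projection `odd` onto the odd part: `xy - yx + 2 y₁x₁`. -/
def superLieMul (F : Type*) [Field F] {A : Type*} [Ring A] [Algebra F A]
    (odd : A →ₗ[F] A) (x y : A) : A :=
  x * y - y * x + (2 : F) • (odd y * odd x)

/-- `M_{2^k}(F)` carries a fine `G`-grading `AD` with a graded involution `θ` which is,
as in Theorem 4.1 of the paper (Bahturin–Shestakov–Zaicev), a tensor product of `k`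
graded `θ`-stable subalgebras, each graded by a subgroup `H_i ≅ ℤ₂ × ℤ₂`. -/
def IsPauliFineInvolutionGrading (F : Type*) [Field F] (G : Type*) [Group G]
    [DecidableEq G] (k : ℕ)
    (AD : G → Submodule F (Matrix (Fin (2 ^ k)) (Fin (2 ^ k)) F))
    (θ : Matrix (Fin (2 ^ k)) (Fin (2 ^ k)) F →ₗ[F]
      Matrix (Fin (2 ^ k)) (Fin (2 ^ k)) F) : Prop :=
  IsAlgGrading F G AD ∧ IsFineGrading F AD ∧
  (∀ x, θ (θ x) = x) ∧ (∀ x y, θ (x * y) = θ y * θ x) ∧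
  (∀ g, ∀ x ∈ AD g, θ x ∈ AD g) ∧
  ∃ (B : Fin k → Subalgebra F (Matrix (Fin (2 ^ k)) (Fin (2 ^ k)) F))
    (H : Fin k → Subgroup G),
    (∀ i, ∀ x ∈ B i, θ x ∈ B i) ∧
    (∀ i, (B i).toSubmodule = ⨆ h : (H i), ((B i).toSubmodule ⊓ AD (h : G))) ∧
    (∀ i, Nonempty ((H i) ≃* Multiplicative (ZMod 2 × ZMod 2))) ∧
    Function.Bijective (PiTensorProduct.lift
      ((MultilinearMap.mkPiAlgebraFin F k
          (Matrix (Fin (2 ^ k)) (Fin (2 ^ k)) F)).compLinearMap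
        (fun i => ((B i).toSubmodule).subtype)))

/-- The combinatorial data describing the elementary grading and the matrix `Φ`
appearing in the classification of orthosymplectic graded superinvolutions
(Theorem 5.2 of the paper): `r` blocks with pairwise distinct degrees `gdeg i`,
paired by a fixed-point-free involution `ρ` with `gdeg i * gdeg (ρ i) = c` constant;
`β`, `β'` assign blocks to the even/odd indices, and `π₀`, `π₁` are index involutions
lying over `ρ` (giving `p_i = p_{ρ i}` and `q_i = q_{ρ i}`), with a sign orientation
`sg` for the skew part. -/
structure OspModelData (G : Type*) (s t : ℕ) where
  r : ℕ
  gdeg : Fin r → G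
  ρ : Equiv.Perm (Fin r)
  c : G
  β : Fin s → Fin r
  β' : Fin t → Fin r
  π₀ : Equiv.Perm (Fin s)
  π₁ : Equiv.Perm (Fin t)
  sg : Fin t → Bool

def OspModelData.Valid {G : Type*} [Group G] {s t : ℕ} (M : OspModelData G s t) : Prop :=
  Function.Injective M.gdeg ∧
  (∀ i, M.ρ (M.ρ i) = i) ∧ (∀ i, M.ρ i ≠ i) ∧ (∀ i, M.gdeg i * M.gdeg (M.ρ i) = M.c) ∧
  (∀ a, M.π₀ (M.π₀ a) = a) ∧ (∀ a, M.β (M.π₀ a) = M.ρ (M.β a)) ∧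
  (∀ a, M.π₁ (M.π₁ a) = a) ∧ (∀ a, M.β' (M.π₁ a) = M.ρ (M.β' a)) ∧
  (∀ a, M.sg (M.π₁ a) = ! M.sg a)

/-- The degree tuple `(g₁^{(p₁)}, …, g_r^{(p_r)}, g₁^{(q₁)}, …, g_r^{(q_r)})`. -/
def OspModelData.deg {G : Type*} {s t : ℕ} (M : OspModelData G s t) :
    Fin s ⊕ Fin t → G :=
  Sum.elim (fun a => M.gdeg (M.β a)) (fun a => M.gdeg (M.β' a))

/-- The matrix `Φ = diag(Φ₀, Φ₁)` with `Φ₀` the symmetric permutation matrix of `π₀`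
(blocks `[[0,I],[I,0]]`) and `Φ₁` the skew-symmetric signed permutation matrix of `π₁`
(blocks `[[0,I],[-I,0]]`). -/
def OspModelData.Phi (F : Type*) [Field F] {G : Type*} {s t : ℕ}
    (M : OspModelData G s t) : Matrix (Fin s ⊕ Fin t) (Fin s ⊕ Fin t) F :=
  Matrix.fromBlocks (permMat F M.π₀) 0 0 (signedPermMat F M.π₁ M.sg)

/-- The orthosymplectic superinvolution `X ↦ Φ⁻¹ X^τ Φ` of the model. -/
noncomputable def OspModelData.starL (F : Type*) [Field F] {G : Type*} {s t : ℕ}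
    (M : OspModelData G s t) :
    Matrix (Fin s ⊕ Fin t) (Fin s ⊕ Fin t) F →ₗ[F]
      Matrix (Fin s ⊕ Fin t) (Fin s ⊕ Fin t) F :=
  matStarL F (M.Phi F)

/-- The combinatorial data describing the elementary grading appearing in the
classification of transpose graded superinvolutions (Theorem 5.3 of the paper):
degree tuples `d`, `d'` for the two halves of the indices with `d a * d' a = c`
constant (this encodes `g₁ g_{i₁} = ⋯ = g_r g_{i_r}`), the degrees of the second half
being among those of the first half (`(i₁, …, i_r)` is a permutation of `(1, …, r)`). -/
structure TrpModelData (G : Type*) (s : ℕ) where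
  d : Fin s → G
  d' : Fin s → G
  c : G

def TrpModelData.Valid {G : Type*} [Group G] {s : ℕ} (M : TrpModelData G s) : Prop :=
  (∀ a, M.d a * M.d' a = M.c) ∧ Set.range M.d' ⊆ Set.range M.d

/-- The degree tuple `(g₁^{(p₁)}, …, g_r^{(p_r)}, g_{i₁}^{(q_{i₁})}, …, g_{i_r}^{(q_{i_r})})`. -/
def TrpModelData.deg {G : Type*} {s : ℕ} (M : TrpModelData G s) : Fin s ⊕ Fin s → G :=
  Sum.elim M.d M.d'

/-- The transpose superinvolution `X ↦ Φ⁻¹ X^τ Φ`, `Φ = [[0, I_n], [I_n, 0]]`. -/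
noncomputable def TrpModelData.starL (F : Type*) [Field F] {G : Type*} {s : ℕ}
    (_M : TrpModelData G s) :
    Matrix (Fin s ⊕ Fin s) (Fin s ⊕ Fin s) F →ₗ[F]
      Matrix (Fin s ⊕ Fin s) (Fin s ⊕ Fin s) F :=
  matStarL F (Matrix.fromBlocks 0 (1 : Matrix (Fin s) (Fin s) F) 1 0)

/-- The inverse of the supertranspose `τ`. -/
def tauInvL (F : Type*) [Field F] {ι : Type*} (π : ι → ZMod 2) :
    Matrix ι ι F →ₗ[F] Matrix ι ι F where
  toFun X := fun a b => (if π a = 0 ∧ π b = 1 then (-1 : F) else 1) * X b a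
  map_add' X Y := by funext a b; exact mul_add _ (X b a) (Y b a)
  map_smul' c X := by
    funext a b
    exact mul_left_comm _ c (X b a)

/-- `retag u v` is the index with the block tag of `u` and the `Fin`-value of `v`. -/
def retag {n : ℕ} (u v : Fin n ⊕ Fin n) : Fin n ⊕ Fin n :=
  match u with
  | Sum.inl _ => Sum.inl (Sum.elim id id v)
  | Sum.inr _ => Sum.inr (Sum.elim id id v)

/-- The super-antiautomorphism `[[A,B],[B,A]] ↦ [[Aᵗ,cBᵗ],[cBᵗ,Aᵗ]]` of `Q(n)`
(blockwise transposition with the odd blocks scaled by `c`); for `c² = -1` it realises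
the isomorphism `Q(n)^{sop} ≅ Q(n)`. -/
def qTransp (F : Type*) [Field F] {n : ℕ} (c : F)
    (X : Matrix (Fin n ⊕ Fin n) (Fin n ⊕ Fin n) F) :
    Matrix (Fin n ⊕ Fin n) (Fin n ⊕ Fin n) F :=
  fun u v => (if matPar u = matPar v then 1 else c) * X (retag u v) (retag v u)

section
open Module

theorem exists_surj_matrix (F T : Type*) [Field F] [IsAlgClosed F] [Ring T] [Algebra F T]
    [FiniteDimensional F T] [Nontrivial T] :
    ∃ (N : ℕ) (_ : NeZero N) (f : T →ₐ[F] Matrix (Fin N) (Fin N) F), Function.Surjective f := by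
  have := IsArtinianRing.of_finite F T
  have : IsSemisimpleRing (T ⧸ Ring.jacobson T) := IsSemiprimaryRing.isSemisimpleRing
  have : FiniteDimensional F (T ⧸ Ring.jacobson T) :=
    FiniteDimensional.of_surjective (Ideal.Quotient.mkₐ F (Ring.jacobson T)).toLinearMap
      (Ideal.Quotient.mkₐ_surjective F _)
  have : Nontrivial (T ⧸ Ring.jacobson T) := by
    apply Ideal.Quotient.nontrivial_iff.mpr
    intro h
    have := Ring.jacobson_lt_top (R := T)
    exact this.ne h
  obtain ⟨n, d, hd, ⟨e⟩⟩ :=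
    IsSemisimpleRing.exists_algEquiv_pi_matrix_of_isAlgClosed F (T ⧸ Ring.jacobson T)
  have hn : 0 < n := by
    rcases Nat.eq_zero_or_pos n with h | h
    · subst h
      exfalso
      have := e.toEquiv.subsingleton
      exact not_subsingleton _ this
    · exact h
  refine ⟨d ⟨0, hn⟩, hd _, (((Pi.evalAlgHom F (fun i => Matrix (Fin (d i)) (Fin (d i)) F) ⟨0, hn⟩).comp
    e.toAlgHom).comp (Ideal.Quotient.mkₐ F (Ring.jacobson T))), ?_⟩
  intro X
  obtain ⟨y, hy⟩ := e.surjective (Pi.single ⟨0, hn⟩ X)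
  obtain ⟨x, rfl⟩ := Ideal.Quotient.mkₐ_surjective F _ y
  refine ⟨x, ?_⟩
  change e (Ideal.Quotient.mkₐ F (Ring.jacobson T) x) ⟨0, hn⟩ = X
  rw [hy]
  simp

theorem matrix_aut_inner {F : Type*} [Field F] {N : ℕ}
    (g : Matrix (Fin N) (Fin N) F ≃ₐ[F] Matrix (Fin N) (Fin N) F) :
    ∃ U V : Matrix (Fin N) (Fin N) F, U * V = 1 ∧ V * U = 1 ∧ ∀ X, g X = U * X * V := by
  let t : Matrix (Fin N) (Fin N) F ≃ₐ[F] End F (Fin N → F) := Matrix.toLinAlgEquiv'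
  obtain ⟨T, hT⟩ := AlgEquiv.eq_linearEquivConjAlgEquiv ((t.symm.trans g).trans t)
  refine ⟨t.symm T.toLinearMap, t.symm T.symm.toLinearMap, ?_, ?_, ?_⟩
  · rw [← map_mul, ← map_one t.symm]; congr 1; ext; simp
  · rw [← map_mul, ← map_one t.symm]; congr 1; ext; simp
  · intro X
    apply t.injective
    rw [map_mul, map_mul, AlgEquiv.apply_symm_apply, AlgEquiv.apply_symm_apply]
    have := congrArg (fun h => h (t X)) hT
    simp only [AlgEquiv.trans_apply, AlgEquiv.symm_apply_apply] at this
    rw [this]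
    rfl

theorem matrix_central {F : Type*} [Field F] {N : ℕ} (Z : Matrix (Fin N) (Fin N) F)
    (h : ∀ X, Z * X = X * Z) : ∃ c : F, Z = c • 1 := by
  obtain ⟨c, hc⟩ := Matrix.mem_range_scalar_of_commute_single (M := Z) (fun i j _ => (h _).symm)
  refine ⟨c, ?_⟩
  rw [← hc, Matrix.scalar_apply, Matrix.smul_one_eq_diagonal]

theorem exists_orthonormal {F V : Type*} [Field F] [IsAlgClosed F] (h2 : (2 : F) ≠ 0)
    [AddCommGroup V] [Module F V] [FiniteDimensional F V] (B : V →ₗ[F] V →ₗ[F] F)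
    (hs : ∀ v w, B v w = B w v) (hn : ∀ v, (∀ w, B v w = 0) → v = 0) :
    ∃ (n : ℕ) (b : Basis (Fin n) F V), ∀ i j, B (b i) (b j) = if i = j then 1 else 0 := by
  have : Invertible (2 : F) := invertibleOfNonzero h2
  obtain ⟨v, hv⟩ := LinearMap.BilinForm.exists_orthogonal_basis (B := B) ⟨fun x y => hs x y⟩
  have ho : ∀ i j, i ≠ j → B (v i) (v j) = 0 := fun i j hij => hv hij
  have hne : ∀ i, B (v i) (v i) ≠ 0 := by
    intro i hi
    apply v.ne_zero i
    apply hn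
    intro w
    have : B (v i) = 0 := by
      apply v.ext
      intro j
      by_cases hij : i = j
      · subst hij; simpa using hi
      · simpa using ho i j hij
    simp [this]
  choose r hr using fun i => IsAlgClosed.exists_pow_nat_eq (B (v i) (v i)) (n := 2) (by norm_num)
  have hr0 : ∀ i, r i ≠ 0 := by
    intro i h
    apply hne i
    rw [← hr i, h]; simp
  refine ⟨_, v.unitsSMul (fun i => (Units.mk0 (r i) (hr0 i))⁻¹), ?_⟩
  intro i j
  simp only [Basis.unitsSMul_apply, Units.smul_def, map_smul, LinearMap.smul_apply, smul_eq_mul]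
  by_cases hij : i = j
  · subst hij
    rw [← hr i]
    simp
    field_simp [hr0 i]
  · simp [hij, ho i j hij]

theorem exists_dual_bases {F V W : Type*} [Field F]
    [AddCommGroup V] [Module F V] [FiniteDimensional F V]
    [AddCommGroup W] [Module F W] [FiniteDimensional F W] (B : V →ₗ[F] W →ₗ[F] F)
    (hn : ∀ v, (∀ w, B v w = 0) → v = 0) (hn' : ∀ w, (∀ v, B v w = 0) → w = 0) :
    ∃ (n : ℕ) (b : Basis (Fin n) F V) (b' : Basis (Fin n) F W),
      ∀ i j, B (b i) (b' j) = if i = j then 1 else 0 := by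
  have i1 : Function.Injective B := by
    rw [injective_iff_map_eq_zero]
    intro v hv
    exact hn v (fun w => by rw [hv]; rfl)
  have i2 : Function.Injective B.flip := by
    rw [injective_iff_map_eq_zero]
    intro w hw
    exact hn' w (fun v => by rw [← LinearMap.flip_apply, hw]; rfl)
  have d1 := LinearMap.finrank_le_finrank_of_injective i1
  have d2 := LinearMap.finrank_le_finrank_of_injective i2
  have e1 : finrank F (W →ₗ[F] F) = finrank F W := Subspace.dual_finrank_eq
  have e2 : finrank F (V →ₗ[F] F) = finrank F V := Subspace.dual_finrank_eq
  let e := LinearEquiv.ofInjectiveOfFinrankEq B.flip i2 (by omega)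
  let b := finBasis F V
  refine ⟨_, b, b.dualBasis.map e.symm, ?_⟩
  intro i j
  have : B (b i) (e.symm (b.dualBasis j)) = (e (e.symm (b.dualBasis j))) (b i) := rfl
  rw [Basis.map_apply, this, e.apply_symm_apply]
  simp [Finsupp.single_apply]
end

section
open Module

/-- A symplectic family. -/
structure SympFam {F V : Type*} [Field F] [AddCommGroup V] [Module F V] (B : V →ₗ[F] V →ₗ[F] F)
    {k : ℕ} (a b : Fin k → V) : Prop where
  ab : ∀ i j, B (a i) (b j) = if i = j then 1 else 0
  aa : ∀ i j, B (a i) (a j) = 0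
  bb : ∀ i j, B (b i) (b j) = 0

section
variable {F V : Type*} [Field F] [AddCommGroup V] [Module F V] (B : V →ₗ[F] V →ₗ[F] F)
    (hs : ∀ v w, B v w = - B w v) {k : ℕ} {a b : Fin k → V}

theorem SympFam.ba (hs : ∀ v w, B v w = - B w v) (h : SympFam B a b) (i j : Fin k) :
    B (b i) (a j) = if i = j then -1 else 0 := by
  rw [hs, h.ab]; by_cases hij : i = j
  · simp [hij]
  · simp [hij, Ne.symm hij]

/-- The projection onto the span of a symplectic family. -/
def sympProj (B : V →ₗ[F] V →ₗ[F] F) (a b : Fin k → V) (x : V) : V :=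
  ∑ i, (B x (b i)) • a i - ∑ i, (B x (a i)) • b i

theorem sympProj_a (hs : ∀ v w, B v w = - B w v) (h : SympFam B a b) (x : V) (j : Fin k) :
    B (x - sympProj B a b x) (a j) = 0 := by
  simp [sympProj, h.aa, h.ba B hs]

theorem sympProj_b (h : SympFam B a b) (x : V) (j : Fin k) :
    B (x - sympProj B a b x) (b j) = 0 := by
  simp [sympProj, h.bb, h.ab]

theorem SympFam.linInd (hs : ∀ v w, B v w = - B w v) (h : SympFam B a b) :
    LinearIndependent F (Sum.elim a b) := by
  rw [Fintype.linearIndependent_iff]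
  intro g hg
  rw [Fintype.sum_sum_type] at hg
  simp only [Sum.elim_inl, Sum.elim_inr] at hg
  rintro (i | i)
  · have := congrArg (fun v => B v (b i)) hg
    simpa [h.bb, h.ab] using this
  · have := congrArg (fun v => B v (a i)) hg
    simpa [h.aa, h.ba B hs] using this

theorem symp_extend (h2 : (2 : F) ≠ 0) (hs : ∀ v w, B v w = - B w v)
    (hn : ∀ v, (∀ w, B v w = 0) → v = 0) (h : SympFam B a b) (v : V)
    (hv : v ≠ 0) (hva : ∀ i, B v (a i) = 0) (hvb : ∀ i, B v (b i) = 0) :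
    ∃ a' b' : Fin (k + 1) → V, SympFam B a' b' := by
  have alt : ∀ x, B x x = 0 := by
    intro x
    have h1 := hs x x
    have h3 : (2 : F) * B x x = 0 := by linear_combination h1
    exact (mul_eq_zero.mp h3).resolve_left h2
  have : ∃ w, B v w ≠ 0 := by
    by_contra hc
    push Not at hc
    exact hv (hn v hc)
  obtain ⟨w, hw⟩ := this
  let w' := (B v w)⁻¹ • (w - sympProj B a b w)
  have hp : B v (sympProj B a b w) = 0 := by simp [sympProj, hva, hvb]
  have hvw : B v w' = 1 := by
    simp [w', hp, hw]
  have hwa : ∀ i, B w' (a i) = 0 := by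
    intro i
    simp only [w', map_smul, LinearMap.smul_apply, sympProj_a B hs h, smul_zero]
  have hwb : ∀ i, B w' (b i) = 0 := by
    intro i
    simp only [w', map_smul, LinearMap.smul_apply, sympProj_b B h, smul_zero]
  have hav : ∀ i, B (a i) v = 0 := fun i => by rw [hs, hva, neg_zero]
  have hbv : ∀ i, B (b i) v = 0 := fun i => by rw [hs, hvb, neg_zero]
  have haw : ∀ i, B (a i) w' = 0 := fun i => by rw [hs, hwa, neg_zero]
  have hbw : ∀ i, B (b i) w' = 0 := fun i => by rw [hs, hwb, neg_zero]
  refine ⟨Fin.cons v a, Fin.cons w' b, ⟨?_, ?_, ?_⟩⟩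
  · intro i j
    refine Fin.cases ?_ (fun i => ?_) i <;> refine Fin.cases ?_ (fun j => ?_) j
    · simpa using hvw
    · simpa [hvb] using (Fin.succ_ne_zero j).symm
    · simp [haw]
    · simp [h.ab]
  · intro i j
    refine Fin.cases ?_ (fun i => ?_) i <;> refine Fin.cases ?_ (fun j => ?_) j <;>
      simp [alt, hva, hav, h.aa]
  · intro i j
    refine Fin.cases ?_ (fun i => ?_) i <;> refine Fin.cases ?_ (fun j => ?_) j <;>
      simp [alt, hwb, hbw, h.bb]

theorem symp_complete [FiniteDimensional F V] (h2 : (2 : F) ≠ 0) (hs : ∀ v w, B v w = - B w v)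
    (hn : ∀ v, (∀ w, B v w = 0) → v = 0) (n : ℕ) :
    ∀ (k : ℕ) (a b : Fin k → V), SympFam B a b → finrank F V ≤ k + n →
    ∃ (k : ℕ) (a b : Fin k → V), SympFam B a b ∧ ⊤ ≤ Submodule.span F (Set.range (Sum.elim a b)) := by
  induction n with
  | zero =>
    intro k a b h hk
    by_cases hc : ∃ v : V, v ≠ 0 ∧ (∀ i, B v (a i) = 0) ∧ (∀ i, B v (b i) = 0)
    · obtain ⟨v, hv, hva, hvb⟩ := hc
      obtain ⟨a', b', h'⟩ := symp_extend B h2 hs hn h v hv hva hvb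
      have := (h'.linInd B hs).fintype_card_le_finrank
      simp at this
      omega
    · push Not at hc
      refine ⟨k, a, b, h, ?_⟩
      intro x _
      have hx : x - sympProj B a b x = 0 := by
        by_contra hne
        obtain ⟨i, hi⟩ := hc _ hne (sympProj_a B hs h x)
        exact hi (sympProj_b B h x i)
      rw [sub_eq_zero] at hx
      rw [hx]
      apply Submodule.sub_mem
      · exact Submodule.sum_mem _ fun i _ => Submodule.smul_mem _ _
          (Submodule.subset_span ⟨Sum.inl i, rfl⟩)
      · exact Submodule.sum_mem _ fun i _ => Submodule.smul_mem _ _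
          (Submodule.subset_span ⟨Sum.inr i, rfl⟩)
  | succ n ih =>
    intro k a b h hk
    by_cases hc : ∃ v : V, v ≠ 0 ∧ (∀ i, B v (a i) = 0) ∧ (∀ i, B v (b i) = 0)
    · obtain ⟨v, hv, hva, hvb⟩ := hc
      obtain ⟨a', b', h'⟩ := symp_extend B h2 hs hn h v hv hva hvb
      exact ih (k + 1) a' b' h' (by omega)
    · push Not at hc
      refine ⟨k, a, b, h, ?_⟩
      intro x _
      have hx : x - sympProj B a b x = 0 := by
        by_contra hne
        obtain ⟨i, hi⟩ := hc _ hne (sympProj_a B hs h x)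
        exact hi (sympProj_b B h x i)
      rw [sub_eq_zero] at hx
      rw [hx]
      apply Submodule.sub_mem
      · exact Submodule.sum_mem _ fun i _ => Submodule.smul_mem _ _
          (Submodule.subset_span ⟨Sum.inl i, rfl⟩)
      · exact Submodule.sum_mem _ fun i _ => Submodule.smul_mem _ _
          (Submodule.subset_span ⟨Sum.inr i, rfl⟩)

theorem exists_symplectic [FiniteDimensional F V] (h2 : (2 : F) ≠ 0) (hs : ∀ v w, B v w = - B w v)
    (hn : ∀ v, (∀ w, B v w = 0) → v = 0) :
    ∃ (k : ℕ) (e : Basis (Fin (2 * k)) F V), ∀ i j, B (e i) (e j) = stdQ F k i j := by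
  obtain ⟨k, a, b, h, hsp⟩ := symp_complete B h2 hs hn (finrank F V) 0 Fin.elim0 Fin.elim0
    ⟨fun i => i.elim0, fun i => i.elim0, fun i => i.elim0⟩ (by omega)
  let e := Basis.mk (h.linInd B hs) hsp
  let r : Fin k ⊕ Fin k ≃ Fin (2 * k) := finSumFinEquiv.trans (finCongr (two_mul k).symm)
  refine ⟨k, e.reindex r, ?_⟩
  intro i j
  obtain ⟨i, rfl⟩ := r.surjective i
  obtain ⟨j, rfl⟩ := r.surjective j
  simp only [Basis.reindex_apply, Equiv.symm_apply_apply, e, Basis.mk_apply]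
  rcases i with i | i <;> rcases j with j | j
  · simp only [Sum.elim_inl, h.aa, stdQ, r]
    simp
    have := i.2; have := j.2
    rw [if_neg (by omega), if_neg (by omega)]
  · simp only [Sum.elim_inl, Sum.elim_inr, h.ab, stdQ, r]
    simp
    have := i.2; have := j.2
    by_cases hij : i = j
    · subst hij; rw [if_pos rfl, if_pos (by omega)]
    · have : (i : ℕ) ≠ j := fun h => hij (Fin.ext h)
      rw [if_neg hij, if_neg (by omega), if_neg (by omega)]
  · simp only [Sum.elim_inl, Sum.elim_inr, h.ba B hs, stdQ, r]
    simp
    have := i.2; have := j.2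
    by_cases hij : i = j
    · subst hij; rw [if_pos rfl, if_neg (by omega), if_pos (by omega)]
    · have : (i : ℕ) ≠ j := fun h => hij (Fin.ext h)
      rw [if_neg hij, if_neg (by omega), if_neg (by omega)]
  · simp only [Sum.elim_inr, h.bb, stdQ, r]
    simp
    have := i.2; have := j.2
    rw [if_neg (by omega), if_neg (by omega)]
end
end

section
open Module

/-- Diagonal matrix with entry `1` on the first block and `c` on the second one. -/
def dg {F : Type*} [Field F] (n m : ℕ) (c : F) : Matrix (Fin n ⊕ Fin m) (Fin n ⊕ Fin m) F :=
  Matrix.diagonal (Sum.elim (fun _ => 1) (fun _ => c))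

section
variable {F V : Type*} [Field F] [AddCommGroup V] [Module F V] (u : V →ₗ[F] V)

theorem mem_p {v : V} : v ∈ LinearMap.ker (u - LinearMap.id) ↔ u v = v := by
  simp [sub_eq_zero]

theorem mem_m {v : V} : v ∈ LinearMap.ker (u + LinearMap.id) ↔ u v = -v := by
  simp [eq_neg_iff_add_eq_zero]
theorem isCompl_pm (h2 : (2 : F) ≠ 0) (hu : ∀ v, u (u v) = v) :
    IsCompl (LinearMap.ker (u - LinearMap.id)) (LinearMap.ker (u + LinearMap.id)) := by
  constructor
  · rw [Submodule.disjoint_def]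
    intro x hx hy
    simp only [LinearMap.mem_ker, LinearMap.sub_apply, LinearMap.add_apply,
      LinearMap.id_apply] at hx hy
    have : (2 : F) • x = 0 := by
      have h : x + x = 0 := by
        have h1 := sub_eq_zero.mp hx
        rw [h1] at hy
        exact hy
      rw [two_smul, h]
    exact (smul_eq_zero.mp this).resolve_left h2
  · rw [codisjoint_iff, eq_top_iff]
    intro x _
    rw [Submodule.mem_sup]
    refine ⟨(2 : F)⁻¹ • (x + u x), ?_, (2 : F)⁻¹ • (x - u x), ?_, ?_⟩
    · rw [mem_p, map_smul, map_add, hu, add_comm]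
    · rw [mem_m, map_smul, map_sub, hu, ← smul_neg, neg_sub]
    · rw [← smul_add]
      have : x + u x + (x - u x) = (2 : F) • x := by rw [two_smul]; abel
      rw [this, smul_smul, inv_mul_cancel₀ h2, one_smul]

theorem exists_basis_pm (h2 : (2 : F) ≠ 0) (hu : ∀ v, u (u v) = v) {ι κ : Type*}
    (bp : Basis ι F (LinearMap.ker (u - LinearMap.id)))
    (bm : Basis κ F (LinearMap.ker (u + LinearMap.id))) :
    ∃ b : Basis (ι ⊕ κ) F V, (∀ i, b (Sum.inl i) = bp i) ∧ (∀ i, b (Sum.inr i) = bm i) := by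
  refine ⟨(bp.prod bm).map (Submodule.prodEquivOfIsCompl _ _ (isCompl_pm u h2 hu)), ?_, ?_⟩
  · intro i; simp
  · intro i; simp

end

theorem basis_matrices {F : Type*} [Field F] {N : ℕ} {κ : Type*} [Fintype κ] [DecidableEq κ]
    (b : Basis κ F (Fin N → F)) :
    ∃ (G : Matrix (Fin N) κ F) (H : Matrix κ (Fin N) F), H * G = 1 ∧ G * H = 1 ∧
      ∀ i j, G i j = b j i := by
  refine ⟨(Pi.basisFun F (Fin N)).toMatrix b, b.toMatrix (Pi.basisFun F (Fin N)), ?_, ?_, ?_⟩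
  · exact Basis.toMatrix_mul_toMatrix_flip _ _
  · exact Basis.toMatrix_mul_toMatrix_flip _ _
  · intro i j; simp [Basis.toMatrix_apply]

section
variable {F : Type*} [Field F] {N : ℕ}

theorem eig_mul {n m : ℕ} (U : Matrix (Fin N) (Fin N) F)
    (b : Basis (Fin n ⊕ Fin m) F (Fin N → F)) (G : Matrix (Fin N) (Fin n ⊕ Fin m) F)
    (hG : ∀ i j, G i j = b j i) (h1 : ∀ i, U.mulVec (b (Sum.inl i)) = b (Sum.inl i))
    (h3 : ∀ i, U.mulVec (b (Sum.inr i)) = - b (Sum.inr i)) :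
    U * G = G * dg n m (-1 : F) := by
  ext i j
  have hl : (U * G) i j = U.mulVec (b j) i := by
    simp [Matrix.mul_apply, Matrix.mulVec, dotProduct, hG]
  rw [hl, dg, Matrix.mul_diagonal, hG]
  rcases j with j | j
  · rw [h1]; simp
  · rw [h3]; simp

theorem gram_eq {κ : Type*} [Fintype κ] [DecidableEq κ] (Ψ : Matrix (Fin N) (Fin N) F)
    (b : Basis κ F (Fin N → F)) (G : Matrix (Fin N) κ F)
    (hG : ∀ i j, G i j = b j i) (i j : κ) :
    (G.transpose * Ψ * G) i j = Matrix.toLinearMap₂' F Ψ (b i) (b j) := by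
  rw [Matrix.toLinearMap₂'_apply', Matrix.mul_assoc]
  simp only [Matrix.mul_apply, Matrix.transpose_apply, dotProduct, Matrix.mulVec, hG]

/-- splitting for an involutive matrix -/
theorem exists_split (h2 : (2 : F) ≠ 0) (U : Matrix (Fin N) (Fin N) F) (hU : U * U = 1) :
    ∃ (n m : ℕ) (G : Matrix (Fin N) (Fin n ⊕ Fin m) F) (H : Matrix (Fin n ⊕ Fin m) (Fin N) F),
      H * G = 1 ∧ G * H = 1 ∧ U * G = G * dg n m (-1 : F) := by
  let u := Matrix.mulVecLin U
  have hu : ∀ v, u (u v) = v := fun v => by simp [u, hU]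
  obtain ⟨b, h1, h3⟩ := exists_basis_pm u h2 hu (finBasis F _) (finBasis F _)
  obtain ⟨G, H, hHG, hGH, hG⟩ := basis_matrices b
  refine ⟨_, _, G, H, hHG, hGH, eig_mul U b G hG ?_ ?_⟩
  · intro i; rw [h1]; exact (mem_p u).mp (Subtype.prop _)
  · intro i; rw [h3]; exact (mem_m u).mp (Subtype.prop _)

theorem form_rel (Ψ U : Matrix (Fin N) (Fin N) F) (c : F) (hc : Ψ.transpose = c • (Ψ * U))
    (v w : Fin N → F) :
    Matrix.toLinearMap₂' F Ψ w v = c * Matrix.toLinearMap₂' F Ψ v (U.mulVec w) := by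
  rw [Matrix.toLinearMap₂'_apply', Matrix.toLinearMap₂'_apply', Matrix.mulVec_mulVec,
    ← smul_eq_mul, ← dotProduct_smul, ← Matrix.smul_mulVec, ← hc, Matrix.mulVec_transpose,
    Matrix.dotProduct_mulVec, dotProduct_comm]

theorem form_nondeg (Ψ Ψi : Matrix (Fin N) (Fin N) F) (h : Ψ * Ψi = 1) (v : Fin N → F)
    (hv : ∀ w : Fin N → F, Matrix.toLinearMap₂' F Ψ v w = 0) : v = 0 := by
  have : Matrix.vecMul v Ψ = 0 := by
    funext j
    have := hv (Pi.single j 1)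
    rw [Matrix.toLinearMap₂'_apply', Matrix.dotProduct_mulVec] at this
    simpa using this
  calc v = Matrix.vecMul (Matrix.vecMul v Ψ) Ψi := by rw [Matrix.vecMul_vecMul, h, Matrix.vecMul_one]
    _ = 0 := by rw [this, Matrix.zero_vecMul]

theorem osp_normal [IsAlgClosed F] (h2 : (2 : F) ≠ 0) (i : F) (hi : i ^ 2 = -1)
    (U Ψ Ψi : Matrix (Fin N) (Fin N) F) (hU : U * U = 1) (hΨ : Ψ * Ψi = 1)
    (hc : Ψ.transpose = Ψ * U) :
    ∃ (n k : ℕ) (G : Matrix (Fin N) (Fin n ⊕ Fin (2 * k)) F)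
      (H : Matrix (Fin n ⊕ Fin (2 * k)) (Fin N) F),
      H * G = 1 ∧ G * H = 1 ∧ U * G = G * dg n (2 * k) (-1 : F) ∧
      G.transpose * Ψ * G = Matrix.fromBlocks 1 0 0 (i • stdQ F k) := by
  have i0 : i ≠ 0 := by rintro rfl; norm_num at hi
  let u := Matrix.mulVecLin U
  have hu : ∀ v, u (u v) = v := fun v => by simp [u, hU]
  let B : (Fin N → F) →ₗ[F] (Fin N → F) →ₗ[F] F := Matrix.toLinearMap₂' F Ψ
  have hB : ∀ v w, B w v = B v (u w) := fun v w => by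
    have := form_rel Ψ U 1 (by simpa using hc) v w
    rw [one_mul] at this
    exact this
  have hn : ∀ v, (∀ w, B v w = 0) → v = 0 := form_nondeg Ψ Ψi hΨ
  have pm : ∀ v w, u v = v → u w = -w → B v w = 0 := by
    intro v w hv hw
    have h1 := hB v w
    have h3 := hB w v
    rw [hw, map_neg] at h1
    rw [hv] at h3
    rw [← h3] at h1
    have : (2 : F) * B v w = 0 := by linear_combination h1
    exact (mul_eq_zero.mp this).resolve_left h2
  have mp : ∀ v w, u v = -v → u w = w → B v w = 0 := by
    intro v w hv hw
    rw [hB, hv, map_neg, pm w v hw hv, neg_zero]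
  have dec : ∀ x, ∃ y z : Fin N → F, u y = y ∧ u z = -z ∧ x = y + z := by
    intro x
    have := Submodule.mem_sup.mp ((isCompl_pm u h2 hu).sup_eq_top ▸ Submodule.mem_top (x := x))
    obtain ⟨y, hy, z, hz, rfl⟩ := this
    exact ⟨y, z, (mem_p u).mp hy, (mem_m u).mp hz, rfl⟩
  let P := LinearMap.ker (u - LinearMap.id)
  let M := LinearMap.ker (u + LinearMap.id)
  obtain ⟨n, bp, hbp⟩ := exists_orthonormal h2 (B.domRestrict₁₂ P P)
    (by
      rintro ⟨v, hv⟩ ⟨w, hw⟩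
      change B v w = B w v
      rw [hB, (mem_p u).mp hv])
    (by
      rintro ⟨v, hv⟩ h
      have : v = 0 := by
        apply hn
        intro x
        obtain ⟨y, z, hy, hz, rfl⟩ := dec x
        rw [map_add, pm v z ((mem_p u).mp hv) hz, add_zero]
        exact h ⟨y, (mem_p u).mpr hy⟩
      simpa using this)
  obtain ⟨k, bm, hbm⟩ := exists_symplectic (i⁻¹ • (B.domRestrict₁₂ M M)) h2
    (by
      rintro ⟨v, hv⟩ ⟨w, hw⟩
      change i⁻¹ * B v w = - (i⁻¹ * B w v)
      rw [hB, (mem_m u).mp hv, map_neg, mul_neg])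
    (by
      rintro ⟨v, hv⟩ h
      have : v = 0 := by
        apply hn
        intro x
        obtain ⟨y, z, hy, hz, rfl⟩ := dec x
        rw [map_add, mp v y ((mem_m u).mp hv) hy, zero_add]
        have := h ⟨z, (mem_m u).mpr hz⟩
        change i⁻¹ * B v z = 0 at this
        exact (mul_eq_zero.mp this).resolve_left (inv_ne_zero i0)
      simpa using this)
  obtain ⟨b, h1, h3⟩ := exists_basis_pm u h2 hu bp bm
  obtain ⟨G, H, hHG, hGH, hG⟩ := basis_matrices b
  have e1 : ∀ j, u (b (Sum.inl j)) = b (Sum.inl j) := by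
    intro j; rw [h1]; exact (mem_p u).mp (Subtype.prop _)
  have e3 : ∀ j, u (b (Sum.inr j)) = - b (Sum.inr j) := by
    intro j; rw [h3]; exact (mem_m u).mp (Subtype.prop _)
  refine ⟨n, k, G, H, hHG, hGH, eig_mul U b G hG e1 e3, ?_⟩
  ext x y
  rw [gram_eq Ψ b G hG]
  change B (b x) (b y) = _
  rcases x with x | x <;> rcases y with y | y
  · rw [h1, h1]
    rw [Matrix.fromBlocks_apply₁₁, Matrix.one_apply]
    exact hbp x y
  · rw [pm _ _ (e1 x) (e3 y)]; simp
  · rw [mp _ _ (e3 x) (e1 y)]; simp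
  · rw [h3, h3]
    have := hbm x y
    change i⁻¹ * B (bm x) (bm y) = _ at this
    simp only [Matrix.fromBlocks_apply₂₂, Matrix.smul_apply, smul_eq_mul]
    rw [← this]
    field_simp

theorem trp_normal (h2 : (2 : F) ≠ 0) (i : F) (hi : i ^ 2 = -1)
    (U Ψ Ψi : Matrix (Fin N) (Fin N) F) (hU : U * U = 1) (hΨ : Ψ * Ψi = 1)
    (hc : Ψ.transpose = (-i) • (Ψ * U)) :
    ∃ (n : ℕ) (G : Matrix (Fin N) (Fin n ⊕ Fin n) F)
      (H : Matrix (Fin n ⊕ Fin n) (Fin N) F),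
      H * G = 1 ∧ G * H = 1 ∧ U * G = G * dg n n (-1 : F) ∧
      G.transpose * Ψ * G = Matrix.fromBlocks 0 1 (i • 1) 0 := by
  have i0 : i ≠ 0 := by rintro rfl; norm_num at hi
  let u := Matrix.mulVecLin U
  have hu : ∀ v, u (u v) = v := fun v => by simp [u, hU]
  let B : (Fin N → F) →ₗ[F] (Fin N → F) →ₗ[F] F := Matrix.toLinearMap₂' F Ψ
  have hB : ∀ v w, B w v = (-i) * B v (u w) := fun v w => form_rel Ψ U (-i) hc v w
  have hn : ∀ v, (∀ w, B v w = 0) → v = 0 := form_nondeg Ψ Ψi hΨ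
  have hBB : ∀ v w, B v w = - B (u v) (u w) := by
    intro v w
    rw [hB w v, hB (u v) w]
    linear_combination (B (u v) (u w)) * hi
  have pp : ∀ v w, u v = v → u w = w → B v w = 0 := by
    intro v w hv hw
    have h1 := hBB v w
    rw [hv, hw] at h1
    have : (2 : F) * B v w = 0 := by linear_combination h1
    exact (mul_eq_zero.mp this).resolve_left h2
  have mm : ∀ v w, u v = -v → u w = -w → B v w = 0 := by
    intro v w hv hw
    have h1 := hBB v w
    rw [hv, hw, map_neg, map_neg, LinearMap.neg_apply, neg_neg] at h1
    have : (2 : F) * B v w = 0 := by linear_combination h1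
    exact (mul_eq_zero.mp this).resolve_left h2
  have dec : ∀ x, ∃ y z : Fin N → F, u y = y ∧ u z = -z ∧ x = y + z := by
    intro x
    have := Submodule.mem_sup.mp ((isCompl_pm u h2 hu).sup_eq_top ▸ Submodule.mem_top (x := x))
    obtain ⟨y, hy, z, hz, rfl⟩ := this
    exact ⟨y, z, (mem_p u).mp hy, (mem_m u).mp hz, rfl⟩
  let P := LinearMap.ker (u - LinearMap.id)
  let M := LinearMap.ker (u + LinearMap.id)
  obtain ⟨n, bp, bm, hb⟩ := exists_dual_bases (B.domRestrict₁₂ P M)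
    (by
      rintro ⟨v, hv⟩ h
      have : v = 0 := by
        apply hn
        intro x
        obtain ⟨y, z, hy, hz, rfl⟩ := dec x
        rw [map_add, pp v y ((mem_p u).mp hv) hy, zero_add]
        exact h ⟨z, (mem_m u).mpr hz⟩
      simpa using this)
    (by
      rintro ⟨v, hv⟩ h
      have : v = 0 := by
        apply hn
        intro x
        obtain ⟨y, z, hy, hz, rfl⟩ := dec x
        rw [map_add, mm v z ((mem_m u).mp hv) hz, add_zero, hB, (mem_m u).mp hv, map_neg]
        have := h ⟨y, (mem_p u).mpr hy⟩
        change B y v = 0 at this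
        rw [this]; simp
      simpa using this)
  obtain ⟨b, h1, h3⟩ := exists_basis_pm u h2 hu bp bm
  obtain ⟨G, H, hHG, hGH, hG⟩ := basis_matrices b
  have e1 : ∀ j, u (b (Sum.inl j)) = b (Sum.inl j) := by
    intro j; rw [h1]; exact (mem_p u).mp (Subtype.prop _)
  have e3 : ∀ j, u (b (Sum.inr j)) = - b (Sum.inr j) := by
    intro j; rw [h3]; exact (mem_m u).mp (Subtype.prop _)
  refine ⟨n, G, H, hHG, hGH, eig_mul U b G hG e1 e3, ?_⟩
  have key : ∀ x y, B (b (Sum.inl x)) (b (Sum.inr y)) = if x = y then 1 else 0 := by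
    intro x y
    rw [h1, h3]; exact hb x y
  ext x y
  rw [gram_eq Ψ b G hG]
  change B (b x) (b y) = _
  rcases x with x | x <;> rcases y with y | y
  · rw [pp _ _ (e1 x) (e1 y)]; simp
  · rw [key]; simp [Matrix.one_apply]
  · rw [hB, e3, map_neg, key, Matrix.fromBlocks_apply₂₁, Matrix.smul_apply, Matrix.one_apply]
    by_cases hxy : x = y
    · subst hxy; simp
    · simp [hxy, Ne.symm hxy]
  · rw [mm _ _ (e3 x) (e3 y)]; simp

theorem normal_forms [IsAlgClosed F] (h2 : (2 : F) ≠ 0) (i : F) (hi : i ^ 2 = -1) [NeZero N]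
    (U Ψ Ψi : Matrix (Fin N) (Fin N) F) (hU : U * U = 1) (hΨ : Ψ * Ψi = 1) (c : F)
    (hc : Ψ.transpose = c • (Ψ * U)) :
    ∃ U' : Matrix (Fin N) (Fin N) F, U' * U' = 1 ∧ (∀ X, U' * X * U' = U * X * U) ∧
    ((∃ (n k : ℕ) (G : Matrix (Fin N) (Fin n ⊕ Fin (2 * k)) F)
      (H : Matrix (Fin n ⊕ Fin (2 * k)) (Fin N) F),
      H * G = 1 ∧ G * H = 1 ∧ U' * G = G * dg n (2 * k) (-1 : F) ∧
      G.transpose * Ψ * G = Matrix.fromBlocks 1 0 0 (i • stdQ F k)) ∨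
    (∃ (n : ℕ) (G : Matrix (Fin N) (Fin n ⊕ Fin n) F)
      (H : Matrix (Fin n ⊕ Fin n) (Fin N) F),
      H * G = 1 ∧ G * H = 1 ∧ U' * G = G * dg n n (-1 : F) ∧
      G.transpose * Ψ * G = Matrix.fromBlocks 0 1 (i • 1) 0)) := by
  have hc4 : c ^ 4 = 1 := by
    have e1 : Ψ = c ^ 2 • (U.transpose * Ψ * U) := by
      have := congrArg Matrix.transpose hc
      rw [Matrix.transpose_transpose, Matrix.transpose_smul, Matrix.transpose_mul, hc] at this
      rw [Matrix.mul_smul, smul_smul, ← pow_two, ← Matrix.mul_assoc] at this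
      exact this
    have hUt : U.transpose * U.transpose = 1 := by
      rw [← Matrix.transpose_mul, hU, Matrix.transpose_one]
    have e2 : Ψ = c ^ 4 • Ψ := by
      have e3 : U.transpose * Ψ * U = c ^ 2 • Ψ := by
        conv_lhs => rw [e1]
        rw [Matrix.mul_smul, Matrix.smul_mul]
        congr 1
        calc U.transpose * (U.transpose * Ψ * U) * U
            = (U.transpose * U.transpose) * Ψ * (U * U) := by simp only [Matrix.mul_assoc]
          _ = Ψ := by rw [hUt, hU, Matrix.one_mul, Matrix.mul_one]
      rw [e3, smul_smul, ← pow_add] at e1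
      exact e1
    have e4 : (c ^ 4 - 1) • (1 : Matrix (Fin N) (Fin N) F) = 0 := by
      rw [← hΨ, ← Matrix.smul_mul, sub_smul, one_smul, ← e2, sub_self, Matrix.zero_mul]
    exact sub_eq_zero.mp ((smul_eq_zero.mp e4).resolve_right one_ne_zero)
  have hneg : Ψ.transpose = (-c) • (Ψ * (-U)) := by rw [hc]; simp
  have hU' : (-U) * (-U) = 1 := by rw [neg_mul_neg, hU]
  have hX : ∀ X, (-U) * X * (-U) = U * X * U := by intro X; simp
  have cases : c = 1 ∨ c = -1 ∨ c = -i ∨ c = i := by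
    have : (c - 1) * ((c + 1) * ((c + i) * (c - i))) = 0 := by
      linear_combination hc4 - (c ^ 2 - 1) * hi
    rcases mul_eq_zero.mp this with h | h
    · exact Or.inl (sub_eq_zero.mp h)
    rcases mul_eq_zero.mp h with h | h
    · exact Or.inr (Or.inl (eq_neg_of_add_eq_zero_left h))
    rcases mul_eq_zero.mp h with h | h
    · exact Or.inr (Or.inr (Or.inl (eq_neg_of_add_eq_zero_left h)))
    · exact Or.inr (Or.inr (Or.inr (sub_eq_zero.mp h)))
  rcases cases with h | h | h | h
  · exact ⟨U, hU, fun _ => rfl, Or.inl (osp_normal h2 i hi U Ψ Ψi hU hΨ (by rw [hc, h, one_smul]))⟩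
  · exact ⟨-U, hU', hX, Or.inl (osp_normal h2 i hi (-U) Ψ Ψi hU' hΨ
      (by rw [hneg, h, neg_neg, one_smul]))⟩
  · exact ⟨U, hU, fun _ => rfl, Or.inr (trp_normal h2 i hi U Ψ Ψi hU hΨ (by rw [hc, h]))⟩
  · exact ⟨-U, hU', hX, Or.inr (trp_normal h2 i hi (-U) Ψ Ψi hU' hΨ (by rw [hneg, h]))⟩
end
end

section
open Module

theorem zmod2_cases (p : ZMod 2) : p = 0 ∨ p = 1 := by revert p; decide

/-- The ordinary antiautomorphism `θ` attached to a superinvolution, with `θ² = σ`. -/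
structure ThetaData {F T : Type*} [Field F] [Ring T] [Algebra F T]
    (S : ZMod 2 → Submodule F T) (φ : T →ₗ[F] T) (i : F) (σ θ : T →ₗ[F] T) : Prop where
  s0 : ∀ x ∈ S 0, σ x = x
  s1 : ∀ x ∈ S 1, σ x = -x
  t0 : ∀ x ∈ S 0, θ x = φ x
  t1 : ∀ x ∈ S 1, θ x = i • φ x
  smul : ∀ x y, σ (x * y) = σ x * σ y
  tmul : ∀ x y, θ (x * y) = θ y * θ x
  tt : ∀ x, θ (θ x) = σ x
  ss : ∀ x, σ (σ x) = x
  m0 : ∀ x, σ x = x → x ∈ S 0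
  m1 : ∀ x, σ x = -x → x ∈ S 1
  dec : ∀ x, ∃ a ∈ S 0, ∃ b ∈ S 1, x = a + b
  gr : ∀ (p : ZMod 2) (x : T), x ∈ S p → φ x ∈ S p
  ff : ∀ x, φ (φ x) = x

theorem exists_theta {F T : Type*} [Field F] (h2 : (2 : F) ≠ 0) [Ring T] [Algebra F T]
    (S : ZMod 2 → Submodule F T) (hS : IsSuperGrading F S)
    (φ : T →ₗ[F] T) (hφ : IsSuperinvolution F S φ) (i : F) (hi : i ^ 2 = -1) :
    ∃ σ θ, ThetaData S φ i σ θ := by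
  have hc : IsCompl (S 0) (S 1) := hS.internal.isCompl (by decide) (by
    ext p; simpa using zmod2_cases p)
  let p0 : T →ₗ[F] T := (S 0).subtype ∘ₗ Submodule.projectionOnto _ _ hc
  let p1 : T →ₗ[F] T := (S 1).subtype ∘ₗ Submodule.projectionOnto _ _ hc.symm
  have p00 : ∀ x ∈ S 0, p0 x = x := fun x hx => by
    have := Submodule.projectionOnto_apply_left hc ⟨x, hx⟩
    simp only [p0, LinearMap.comp_apply]; rw [this]; rfl
  have p01 : ∀ x ∈ S 1, p0 x = 0 := fun x hx => by
    have := (Submodule.projectionOnto_apply_eq_zero_iff hc).mpr hx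
    simp only [p0, LinearMap.comp_apply]; rw [this]; rfl
  have p11 : ∀ x ∈ S 1, p1 x = x := fun x hx => by
    have := Submodule.projectionOnto_apply_left hc.symm ⟨x, hx⟩
    simp only [p1, LinearMap.comp_apply]; rw [this]; rfl
  have p10 : ∀ x ∈ S 0, p1 x = 0 := fun x hx => by
    have := (Submodule.projectionOnto_apply_eq_zero_iff hc.symm).mpr hx
    simp only [p1, LinearMap.comp_apply]; rw [this]; rfl
  have dec : ∀ x, ∃ a ∈ S 0, ∃ b ∈ S 1, x = a + b := by
    intro x
    obtain ⟨a, ha, b, hb, h⟩ := Submodule.mem_sup.mp (hc.sup_eq_top ▸ Submodule.mem_top (x := x))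
    exact ⟨a, ha, b, hb, h.symm⟩
  let σ : T →ₗ[F] T := p0 - p1
  let θ : T →ₗ[F] T := φ ∘ₗ p0 + i • (φ ∘ₗ p1)
  have s0 : ∀ x ∈ S 0, σ x = x := fun x hx => by simp [σ, p00 x hx, p10 x hx]
  have s1 : ∀ x ∈ S 1, σ x = -x := fun x hx => by simp [σ, p11 x hx, p01 x hx]
  have t0 : ∀ x ∈ S 0, θ x = φ x := fun x hx => by simp [θ, p00 x hx, p10 x hx]
  have t1 : ∀ x ∈ S 1, θ x = i • φ x := fun x hx => by simp [θ, p11 x hx, p01 x hx]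
  have m00 : ∀ {x y}, x ∈ S 0 → y ∈ S 0 → x * y ∈ S 0 := fun hx hy => by
    simpa using hS.mul_mem hx hy
  have m01 : ∀ {x y}, x ∈ S 0 → y ∈ S 1 → x * y ∈ S 1 := fun hx hy => by
    simpa using hS.mul_mem hx hy
  have m10 : ∀ {x y}, x ∈ S 1 → y ∈ S 0 → x * y ∈ S 1 := fun hx hy => by
    simpa using hS.mul_mem hx hy
  have m11 : ∀ {x y}, x ∈ S 1 → y ∈ S 1 → x * y ∈ S 0 := fun hx hy => by
    have := hS.mul_mem hx hy
    rwa [show (1 : ZMod 2) + 1 = 0 by decide] at this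
  have sgn00 : superSign F 0 0 = 1 := by simp [superSign]
  have sgn01 : superSign F 0 1 = 1 := by simp [superSign]
  have sgn10 : superSign F 1 0 = 1 := by simp [superSign]
  have sgn11 : superSign F 1 1 = -1 := by simp [superSign]
  have ext0 : ∀ x : T, (2 : F) • x = 0 → x = 0 := fun x hx =>
    (smul_eq_zero.mp hx).resolve_left h2
  refine ⟨σ, θ, s0, s1, t0, t1, ?_, ?_, ?_, ?_, ?_, ?_, dec, hφ.graded, hφ.invol⟩
  · intro x y
    obtain ⟨a, ha, b, hb, rfl⟩ := dec x
    obtain ⟨a', ha', b', hb', rfl⟩ := dec y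
    simp only [mul_add, add_mul, map_add, s0 _ (m00 ha ha'), s1 _ (m01 ha hb'),
      s1 _ (m10 hb ha'), s0 _ (m11 hb hb'), s0 _ ha, s0 _ ha', s1 _ hb, s1 _ hb', mul_neg, neg_mul,
      neg_neg]
    abel
  · intro x y
    obtain ⟨a, ha, b, hb, rfl⟩ := dec x
    obtain ⟨a', ha', b', hb', rfl⟩ := dec y
    simp only [mul_add, add_mul, map_add, t0 _ (m00 ha ha'), t1 _ (m01 ha hb'),
      t1 _ (m10 hb ha'), t0 _ (m11 hb hb'), t0 _ ha, t0 _ ha', t1 _ hb, t1 _ hb',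
      hφ.anti ha ha', hφ.anti ha hb', hφ.anti hb ha', hφ.anti hb hb', sgn00, sgn01, sgn10, sgn11,
      one_smul, smul_mul_assoc, mul_smul_comm, smul_add, smul_smul, ← pow_two, hi]
    abel
  · intro x
    obtain ⟨a, ha, b, hb, rfl⟩ := dec x
    simp only [map_add, t0 _ ha, t1 _ hb, t0 _ (hφ.graded 0 a ha), map_smul,
      t1 _ (hφ.graded 1 b hb), hφ.invol, smul_smul, ← pow_two, hi, s0 _ ha, s1 _ hb, neg_smul,
      one_smul]
  · intro x
    obtain ⟨a, ha, b, hb, rfl⟩ := dec x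
    simp only [map_add, s0 _ ha, s1 _ hb, map_neg, neg_neg]
  · intro x hx
    obtain ⟨a, ha, b, hb, rfl⟩ := dec x
    simp only [map_add, s0 _ ha, s1 _ hb] at hx
    have : b = 0 := by
      apply ext0
      rw [two_smul]
      have h := add_left_cancel hx
      nth_rewrite 1 [← h]
      simp
    rw [this, add_zero]; exact ha
  · intro x hx
    obtain ⟨a, ha, b, hb, rfl⟩ := dec x
    simp only [map_add, s0 _ ha, s1 _ hb, neg_add] at hx
    have : a = 0 := by
      apply ext0
      rw [two_smul]
      have h := add_right_cancel hx
      nth_rewrite 1 [h]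
      simp
    rw [this, zero_add]; exact hb

section
variable {F : Type*} [Field F] {n m : ℕ}

theorem dg_mul (a b : F) : dg n m a * dg n m b = dg n m (a * b) := by
  simp only [dg, Matrix.diagonal_mul_diagonal]
  congr 1; ext x; rcases x with x | x <;> simp

theorem dg_one : dg n m (1 : F) = 1 := by
  rw [dg, ← Matrix.diagonal_one]
  congr 1; ext x; rcases x with x | x <;> simp

theorem dg_mul_apply (a b : F) (X : Matrix (Fin n ⊕ Fin m) (Fin n ⊕ Fin m) F)
    (x y : Fin n ⊕ Fin m) : (dg n m a * X * dg n m b) x y =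
      Sum.elim (fun _ => 1) (fun _ => a) x * X x y * Sum.elim (fun _ => 1) (fun _ => b) y := by
  rw [dg, dg, Matrix.mul_diagonal, Matrix.diagonal_mul]

theorem mem_matSuper_zero (h2 : (2 : F) ≠ 0) (X : Matrix (Fin n ⊕ Fin m) (Fin n ⊕ Fin m) F) :
    X ∈ matSuper F n m 0 ↔ dg n m (-1) * X * dg n m (-1) = X := by
  have hn : ∀ z : F, -z = z → z = 0 := fun z hz => by
    have : 2 * z = 0 := by linear_combination -hz
    exact (mul_eq_zero.mp this).resolve_left h2
  constructor
  · intro h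
    ext x y
    rw [dg_mul_apply]
    have := h x y
    rcases x with x | x <;> rcases y with y | y <;> simp_all [matPar]
  · intro h x y hxy
    have := congrFun (congrFun h x) y
    rw [dg_mul_apply] at this
    rcases x with x | x <;> rcases y with y | y <;> simp_all [matPar]
    exact absurd (by decide) hxy

theorem mem_matSuper_one (h2 : (2 : F) ≠ 0) (X : Matrix (Fin n ⊕ Fin m) (Fin n ⊕ Fin m) F) :
    X ∈ matSuper F n m 1 ↔ dg n m (-1) * X * dg n m (-1) = -X := by
  have hn : ∀ z : F, z = -z → z = 0 := fun z hz => by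
    have : 2 * z = 0 := by linear_combination hz
    exact (mul_eq_zero.mp this).resolve_left h2
  have h110 : (1 : ZMod 2) + 1 ≠ 1 := by decide
  constructor
  · intro h
    ext x y
    rw [dg_mul_apply, Matrix.neg_apply]
    have := h x y
    rcases x with x | x <;> rcases y with y | y
    · have h0 := this (by simp [matPar])
      simp [h0]
    · simp
    · simp
    · have h0 := this (by simpa [matPar] using h110)
      simp [h0]
  · intro h x y hxy
    have := congrFun (congrFun h x) y
    rw [dg_mul_apply, Matrix.neg_apply] at this
    rcases x with x | x <;> rcases y with y | y
    · exact hn _ (by simpa using this)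
    · exact absurd (by simp [matPar]) hxy
    · exact absurd (by simp [matPar]) hxy
    · exact hn _ (by linear_combination (by simpa using this : X (Sum.inr x) (Sum.inr y) = - X (Sum.inr x) (Sum.inr y)))

theorem tau_even (X : Matrix (Fin n ⊕ Fin m) (Fin n ⊕ Fin m) F) (hX : X ∈ matSuper F n m 0)
    (a b : F) (hab : a * b = 1) : tauL F matPar X = dg n m a * X.transpose * dg n m b := by
  ext x y
  rw [dg_mul_apply]
  have h := hX y x
  change (if matPar x = 1 ∧ matPar y = 0 then (-1 : F) else 1) * X y x = _
  rcases x with x | x <;> rcases y with y | y <;> simp_all [matPar]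
  rw [mul_right_comm, hab, one_mul]

theorem tau_odd (X : Matrix (Fin n ⊕ Fin m) (Fin n ⊕ Fin m) F) (hX : X ∈ matSuper F n m 1)
    (i : F) (hi : i ^ 2 = -1) :
    tauL F matPar X = i • (dg n m i * X.transpose * dg n m (-i)) := by
  have h110 : (1 : ZMod 2) + 1 ≠ 1 := by decide
  ext x y
  rw [Matrix.smul_apply, dg_mul_apply, smul_eq_mul]
  have h := hX y x
  change (if matPar x = 1 ∧ matPar y = 0 then (-1 : F) else 1) * X y x = _
  rcases x with x | x <;> rcases y with y | y
  · simp_all [matPar]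
  · simp [matPar]; linear_combination (X (Sum.inr y) (Sum.inl x)) * (hi)
  · simp [matPar]; linear_combination - (X (Sum.inl y) (Sum.inr x)) * (hi)
  · have h0 : X (Sum.inr y) (Sum.inr x) = 0 := h (by simpa [matPar] using h110)
    simp [h0]

theorem tauInv_tau (X : Matrix (Fin n ⊕ Fin m) (Fin n ⊕ Fin m) F) :
    tauInvL F matPar (tauL F matPar X) = X := by
  ext x y
  change (if matPar x = 0 ∧ matPar y = 1 then (-1 : F) else 1) *
    ((if matPar y = 1 ∧ matPar x = 0 then (-1 : F) else 1) * X x y) = _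
  rcases x with x | x <;> rcases y with y | y <;> simp [matPar]
end
end

section
open Module

/-- A two-sided ideal, as a submodule. -/
def IsId {F T : Type*} [Field F] [Ring T] [Algebra F T] (I : Submodule F T) : Prop :=
  ∀ x ∈ I, ∀ r : T, r * x ∈ I ∧ x * r ∈ I

section
variable {F T : Type*} [Field F] [Ring T] [Algebra F T]
    {S : ZMod 2 → Submodule F T} {φ : T →ₗ[F] T} {i : F} {σ θ : T →ₗ[F] T}

theorem ThetaData.sone (D : ThetaData S φ i σ θ) : σ 1 = 1 := by
  have h := D.smul (σ 1) 1
  rw [mul_one, D.ss, one_mul] at h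
  exact h.symm

theorem ThetaData.tone (D : ThetaData S φ i σ θ) : θ 1 = 1 := by
  have h := D.tmul (θ 1) 1
  rw [mul_one, D.tt, D.sone, mul_one] at h
  exact h.symm

theorem ThetaData.ts (D : ThetaData S φ i σ θ) (x : T) : θ (σ x) = σ (θ x) := by
  rw [← D.tt, ← D.tt]

theorem ThetaData.simple (h2 : (2 : F) ≠ 0) (hi : i ^ 2 = -1) (D : ThetaData S φ i σ θ)
    (hsimple : ∀ I : Submodule F T,
      (∀ x ∈ I, ∀ r : T, r * x ∈ I ∧ x * r ∈ I) → I = (I ⊓ S 0) ⊔ (I ⊓ S 1) →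
      (∀ x ∈ I, φ x ∈ I) → I = ⊥ ∨ I = ⊤) (I : Submodule F T) (hI : IsId I)
    (ht : ∀ x ∈ I, θ x ∈ I) : I = ⊥ ∨ I = ⊤ := by
  have hs : ∀ x ∈ I, σ x ∈ I := fun x hx => D.tt x ▸ ht _ (ht _ hx)
  have key : ∀ x ∈ I, ∃ a ∈ I ⊓ S 0, ∃ b ∈ I ⊓ S 1, a + b = x := by
    intro x hx
    have e : (2 : F)⁻¹ • (x + σ x) + (2 : F)⁻¹ • (x - σ x) = x := by
      rw [← smul_add, add_add_sub_cancel, ← two_smul F x, smul_smul, inv_mul_cancel₀ h2, one_smul]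
    refine ⟨(2 : F)⁻¹ • (x + σ x), ⟨I.smul_mem _ (I.add_mem hx (hs x hx)), D.m0 _ ?_⟩,
      (2 : F)⁻¹ • (x - σ x), ⟨I.smul_mem _ (I.sub_mem hx (hs x hx)), D.m1 _ ?_⟩, e⟩
    · rw [map_smul, map_add, D.ss, add_comm]
    · rw [map_smul, map_sub, D.ss, ← smul_neg, neg_sub]
  apply hsimple I hI
  · apply le_antisymm
    · intro x hx
      obtain ⟨a, ha, b, hb, h⟩ := key x hx
      exact Submodule.mem_sup.mpr ⟨a, ha, b, hb, h⟩
    · exact sup_le inf_le_left inf_le_left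
  · intro x hx
    obtain ⟨a, ha, b, hb, rfl⟩ := key x hx
    rw [map_add]
    refine I.add_mem (D.t0 a ha.2 ▸ ht a ha.1) ?_
    have h := ht b hb.1
    rw [D.t1 b hb.2] at h
    have := I.smul_mem (-i) h
    rwa [smul_smul, show -i * i = 1 by linear_combination -hi, one_smul] at this

/-- `σ` as an algebra homomorphism. -/
def ThetaData.sHom (D : ThetaData S φ i σ θ) : T →ₐ[F] T := AlgHom.ofLinearMap σ D.sone D.smul

theorem ThetaData.sHom_apply (D : ThetaData S φ i σ θ) (x : T) : D.sHom x = σ x := rfl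

/-- `x ↦ (f (θ x))ᵀ` as an algebra homomorphism. -/
def ThetaData.tHom {N : Type*} [Fintype N] [DecidableEq N] (D : ThetaData S φ i σ θ)
    (f : T →ₐ[F] Matrix N N F) : T →ₐ[F] Matrix N N F :=
  AlgHom.ofLinearMap ((Matrix.transposeLinearEquiv N N F F).toLinearMap ∘ₗ f.toLinearMap ∘ₗ θ)
    (by simp [D.tone]) (by intro x y; simp [D.tmul, Matrix.transpose_mul])

theorem ThetaData.tHom_apply {N : Type*} [Fintype N] [DecidableEq N] (D : ThetaData S φ i σ θ)
    (f : T →ₐ[F] Matrix N N F) (x : T) : D.tHom f x = (f (θ x)).transpose := rfl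

/-- Kernel as a submodule. -/
def kr {R : Type*} [Ring R] [Algebra F R] (f : T →ₐ[F] R) : Submodule F T :=
  LinearMap.ker f.toLinearMap

theorem mem_kr {R : Type*} [Ring R] [Algebra F R] (f : T →ₐ[F] R) (x : T) :
    x ∈ kr f ↔ f x = 0 := Iff.rfl

theorem isId_kr {R : Type*} [Ring R] [Algebra F R] (f : T →ₐ[F] R) : IsId (kr f) := by
  intro x hx r
  rw [mem_kr] at hx
  simp [mem_kr, hx]

theorem dichotomy {N : ℕ} [NeZero N] (f : T →ₐ[F] Matrix (Fin N) (Fin N) F)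
    (hf : Function.Surjective f) (I : Submodule F T) (hI : IsId I) :
    I ≤ kr f ∨ ∃ x ∈ I, f x = 1 := by
  let J : TwoSidedIdeal (Matrix (Fin N) (Fin N) F) := TwoSidedIdeal.mk' {y | ∃ x ∈ I, f x = y}
    ⟨0, I.zero_mem, map_zero f⟩
    (by rintro _ _ ⟨x, hx, rfl⟩ ⟨y, hy, rfl⟩; exact ⟨x + y, I.add_mem hx hy, map_add f x y⟩)
    (by rintro _ ⟨x, hx, rfl⟩; exact ⟨-x, I.neg_mem hx, map_neg f x⟩)
    (by
      rintro a _ ⟨x, hx, rfl⟩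
      obtain ⟨r, rfl⟩ := hf a
      exact ⟨r * x, (hI x hx r).1, map_mul f r x⟩)
    (by
      rintro _ a ⟨x, hx, rfl⟩
      obtain ⟨r, rfl⟩ := hf a
      exact ⟨x * r, (hI x hx r).2, map_mul f x r⟩)
  have hJ : ∀ y, y ∈ J ↔ ∃ x ∈ I, f x = y := fun y => TwoSidedIdeal.mem_mk' _ _ _ _ _ _ y
  rcases eq_bot_or_eq_top J with h | h
  · left
    intro x hx
    have : f x ∈ J := (hJ _).mpr ⟨x, hx, rfl⟩
    rw [h] at this
    exact this
  · right
    have : (1 : Matrix (Fin N) (Fin N) F) ∈ J := by rw [h]; trivial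
    exact (hJ _).mp this

theorem descend {N : ℕ} [NeZero N] (f h : T →ₐ[F] Matrix (Fin N) (Fin N) F)
    (hf : Function.Surjective f) (hh : Function.Surjective h) (hk : kr f ≤ kr h) :
    ∃ U V : Matrix (Fin N) (Fin N) F, U * V = 1 ∧ V * U = 1 ∧ ∀ x, h x = U * f x * V := by
  have key : ∀ x y, f x = f y → h x = h y := by
    intro x y hxy
    have : x - y ∈ kr h := hk (by rw [mem_kr, map_sub, hxy, sub_self])
    rwa [mem_kr, map_sub, sub_eq_zero] at this
  let k := Function.surjInv hf
  have hfk : ∀ y, f (k y) = y := Function.surjInv_eq hf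
  let g0 : Matrix (Fin N) (Fin N) F →ₗ[F] Matrix (Fin N) (Fin N) F :=
    { toFun := fun y => h (k y)
      map_add' := fun x y => by
        rw [← map_add]; apply key; rw [hfk, map_add, hfk, hfk]
      map_smul' := fun c x => by
        rw [RingHom.id_apply, ← map_smul]; apply key; rw [hfk, map_smul, hfk] }
  let g : Matrix (Fin N) (Fin N) F →ₐ[F] Matrix (Fin N) (Fin N) F :=
    AlgHom.ofLinearMap g0
      (by
        change h (k 1) = 1
        exact (key _ _ ((hfk 1).trans (map_one f).symm)).trans (map_one h))
      (fun x y => by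
        change h (k (x * y)) = h (k x) * h (k y)
        rw [← map_mul]; apply key; rw [hfk, map_mul, hfk, hfk])
  have hg : ∀ x, g (f x) = h x := fun x => key _ _ (hfk _)
  have gs : Function.Surjective g := fun y => by
    obtain ⟨x, rfl⟩ := hh y
    exact ⟨f x, hg x⟩
  have gi : Function.Injective g := by
    have := (LinearMap.injective_iff_surjective (f := g.toLinearMap)).mpr gs
    exact this
  obtain ⟨U, V, h1, h2, h3⟩ := matrix_aut_inner (AlgEquiv.ofBijective g ⟨gi, gs⟩)
  exact ⟨U, V, h1, h2, fun x => by rw [← hg, ← h3]; rfl⟩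

theorem joint_surj {R R' : Type*} [Ring R] [Algebra F R] [Ring R'] [Algebra F R']
    (f : T →ₐ[F] R) (g : T →ₐ[F] R') (u : T) (hu : f u = 0) (hu' : g u = 1) (a b : T) :
    ∃ x, f x = f a ∧ g x = g b := by
  refine ⟨a * (1 - u) + b * u, ?_, ?_⟩
  · simp [hu]
  · simp [hu']
end
end

section
open Module

section
variable {F T : Type*} [Field F] [Ring T] [Algebra F T]
    {S : ZMod 2 → Submodule F T} {φ : T →ₗ[F] T} {i : F} {σ θ : T →ₗ[F] T}

theorem ThetaData.tHom_surj {N : Type*} [Fintype N] [DecidableEq N] (D : ThetaData S φ i σ θ)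
    (f : T →ₐ[F] Matrix N N F) (hf : Function.Surjective f) : Function.Surjective (D.tHom f) := by
  intro y
  obtain ⟨x, hx⟩ := hf y.transpose
  refine ⟨θ (σ x), ?_⟩
  rw [D.tHom_apply, D.tt, D.ss, hx, Matrix.transpose_transpose]

theorem ThetaData.sHom_surj {R : Type*} [Ring R] [Algebra F R] (D : ThetaData S φ i σ θ)
    (f : T →ₐ[F] R) (hf : Function.Surjective f) : Function.Surjective (f.comp D.sHom) := by
  intro y
  obtain ⟨x, hx⟩ := hf y
  refine ⟨σ x, ?_⟩
  rw [AlgHom.comp_apply, D.sHom_apply, D.ss, hx]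

theorem trichotomy (D : ThetaData S φ i σ θ)
    (hs : ∀ I : Submodule F T, IsId I → (∀ x ∈ I, θ x ∈ I) → I = ⊥ ∨ I = ⊤)
    {N : ℕ} [NeZero N] (f : T →ₐ[F] Matrix (Fin N) (Fin N) F) (hf : Function.Surjective f) :
    (∀ x, f x = 0 → x = 0) ∨
    ((∀ x, f x = 0 → f (σ x) = 0 → f (θ x) = 0 → f (σ (θ x)) = 0 → x = 0) ∧
      (∃ u, f u = 0 ∧ f (σ u) = 0 ∧ f (θ u) = 1 ∧ f (σ (θ u)) = 1) ∧
      ((∀ x, f x = 0 → f (σ x) = 0) ∨ ∃ v, f v = 0 ∧ f (σ v) = 1)) := by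
  have hne : ∀ I : Submodule F T, I ≤ kr f → I ≠ ⊤ := by
    rintro I h rfl
    have : f 1 = 0 := h (Submodule.mem_top (x := (1 : T)))
    rw [map_one] at this
    exact one_ne_zero this
  let fs := f.comp D.sHom
  have hfs : ∀ x, fs x = f (σ x) := fun _ => rfl
  let g := D.tHom f
  have hg : ∀ x, g x = (f (θ x)).transpose := fun _ => rfl
  have hg0 : ∀ x, g x = 0 ↔ f (θ x) = 0 := fun x => by
    rw [hg, Matrix.transpose_eq_zero]
  let gs := g.comp D.sHom
  have hgs0 : ∀ x, gs x = 0 ↔ f (σ (θ x)) = 0 := fun x => by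
    rw [← D.ts, ← hg0]; rfl
  let K : Submodule F T := kr f ⊓ kr fs
  let L : Submodule F T := kr g ⊓ kr gs
  have idinf : ∀ {A B : Submodule F T}, IsId A → IsId B → IsId (A ⊓ B) :=
    fun hA hB x hx r => ⟨⟨(hA x hx.1 r).1, (hB x hx.2 r).1⟩, ⟨(hA x hx.1 r).2, (hB x hx.2 r).2⟩⟩
  have hK : IsId K := idinf (isId_kr _) (isId_kr _)
  have hL : IsId L := idinf (isId_kr _) (isId_kr _)
  have mK : ∀ x, x ∈ K ↔ f x = 0 ∧ f (σ x) = 0 := fun x => Iff.rfl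
  have mL : ∀ x, x ∈ L ↔ f (θ x) = 0 ∧ f (σ (θ x)) = 0 := fun x => by
    rw [← hg0, ← hgs0]; rfl
  have tKL : ∀ x ∈ K, θ x ∈ L := by
    intro x hx
    rw [mK] at hx
    rw [mL, D.tt, D.ss]
    exact ⟨hx.2, hx.1⟩
  have tLK : ∀ x ∈ L, θ x ∈ K := by
    intro x hx
    rw [mL] at hx
    rw [mK]
    exact hx
  have hbot : K ⊓ L = ⊥ := by
    refine (hs (K ⊓ L) (idinf hK hL) fun x hx => ⟨tLK x hx.2, tKL x hx.1⟩).resolve_right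
      (hne _ (inf_le_left.trans inf_le_left))
  have hsup : IsId (K ⊔ L) := by
    intro x hx r
    obtain ⟨a, ha, b, hb, rfl⟩ := Submodule.mem_sup.mp hx
    exact ⟨Submodule.mem_sup.mpr ⟨r * a, (hK a ha r).1, r * b, (hL b hb r).1, (mul_add ..).symm⟩,
      Submodule.mem_sup.mpr ⟨a * r, (hK a ha r).2, b * r, (hL b hb r).2, (add_mul ..).symm⟩⟩
  have hsupt : ∀ x ∈ K ⊔ L, θ x ∈ K ⊔ L := by
    intro x hx
    obtain ⟨a, ha, b, hb, rfl⟩ := Submodule.mem_sup.mp hx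
    exact Submodule.mem_sup.mpr ⟨θ b, tLK b hb, θ a, tKL a ha, by rw [map_add, add_comm]⟩
  rcases hs _ hsup hsupt with h | h
  · left
    have hK0 : ∀ x, f x = 0 → f (σ x) = 0 → x = 0 := fun x h1 h2 => by
      have : x ∈ K ⊔ L := Submodule.mem_sup_left ((mK x).mpr ⟨h1, h2⟩)
      rwa [h] at this
    rcases dichotomy g (D.tHom_surj f hf) (kr f) (isId_kr f) with hM | ⟨m, hm, hm1⟩
    · have hM' : ∀ x ∈ kr f, θ x ∈ kr f := fun x hx => (hg0 x).mp (hM hx)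
      have := (hs _ (isId_kr f) hM').resolve_right (hne _ le_rfl)
      intro x hx
      have hx' : x ∈ kr f := hx
      rwa [this] at hx'
    · rcases dichotomy g (D.tHom_surj f hf) (kr fs) (isId_kr fs) with hM | ⟨m', hm', hm1'⟩
      · have hM' : ∀ x, f (σ x) = 0 → f (θ x) = 0 := fun x hx => (hg0 x).mp (hM hx)
        intro x hx
        apply hK0 x hx
        rw [← D.tt]
        apply hM'
        rw [← D.ts]
        apply hM'
        rw [D.ss]
        exact hx
      · exfalso
        have : m * m' = 0 := by
          apply hK0
          · rw [map_mul, (mem_kr f m).mp hm, zero_mul]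
          · change fs _ = 0
            rw [map_mul, (mem_kr fs m').mp hm', mul_zero]
        have h1 : g (m * m') = 1 := by rw [map_mul, hm1, hm1', one_mul]
        rw [this, map_zero] at h1
        exact zero_ne_one h1
  · right
    refine ⟨fun x h1 h2 h3 h4 => ?_, ?_, ?_⟩
    · have : x ∈ K ⊓ L := ⟨(mK x).mpr ⟨h1, h2⟩, (mL x).mpr ⟨h3, h4⟩⟩
      rwa [hbot] at this
    · obtain ⟨u, hu, w, hw, huw⟩ := Submodule.mem_sup.mp (h ▸ Submodule.mem_top (x := (1 : T)))
      rw [mK] at hu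
      rw [mL] at hw
      have : u = 1 - w := eq_sub_of_add_eq huw
      refine ⟨u, hu.1, hu.2, ?_, ?_⟩
      · rw [this, map_sub, D.tone, map_sub, map_one, hw.1, sub_zero]
      · rw [this, map_sub, D.tone, map_sub, map_sub, D.sone, map_one, hw.2, sub_zero]
    · rcases dichotomy f hf (kr fs) (isId_kr fs) with hM | ⟨m, hm, hm1⟩
      · left
        intro x hx
        apply hM
        change f (σ (σ x)) = 0
        rwa [D.ss]
      · right
        refine ⟨σ m, hm, ?_⟩
        rwa [D.ss]

/-- If the kernel of `f` is `σ`-stable then `σ` is implemented by an involutive matrix. -/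
theorem sigma_inner [IsAlgClosed F] (D : ThetaData S φ i σ θ)
    {N : ℕ} [NeZero N] (f : T →ₐ[F] Matrix (Fin N) (Fin N) F) (hf : Function.Surjective f)
    (hk : ∀ x, f x = 0 → f (σ x) = 0) :
    ∃ U : Matrix (Fin N) (Fin N) F, U * U = 1 ∧ ∀ x, f (σ x) = U * f x * U := by
  obtain ⟨U, V, h1, h2, h3⟩ := descend f (f.comp D.sHom) hf (D.sHom_surj f hf) hk
  have h3 : ∀ x, f (σ x) = U * f x * V := h3
  have hc : ∀ X, (U * U) * X = X * (U * U) := by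
    intro X
    obtain ⟨x, rfl⟩ := hf X
    have e := h3 (σ x)
    rw [D.ss, h3] at e
    calc U * U * f x = (U * (U * f x * V) * V) * (U * U) := by
          simp only [mul_assoc]
          rw [← mul_assoc V U U, h2, one_mul, h2, mul_one]
      _ = _ := by rw [← e]
  obtain ⟨c, hc⟩ := matrix_central _ hc
  have hc0 : c ≠ 0 := by
    rintro rfl
    have : (U * U) * (V * V) = 1 := by
      rw [mul_assoc, ← mul_assoc U V V, h1, one_mul, h1]
    rw [hc, zero_smul, zero_mul] at this
    exact zero_ne_one this
  obtain ⟨d, hd⟩ := IsAlgClosed.exists_pow_nat_eq c (n := 2) (by norm_num)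
  have hd0 : d ≠ 0 := by rintro rfl; apply hc0; rw [← hd]; simp
  have hV : V = c⁻¹ • U := by
    have : V * (U * U) = U := by rw [← mul_assoc, h2, one_mul]
    rw [hc, Matrix.mul_smul, mul_one] at this
    rw [← this, smul_smul, inv_mul_cancel₀ hc0, one_smul]
  refine ⟨d⁻¹ • U, ?_, fun x => ?_⟩
  · rw [Matrix.smul_mul, Matrix.mul_smul, hc, smul_smul, smul_smul, ← hd]
    rw [show d⁻¹ * d⁻¹ * d ^ 2 = 1 by field_simp, one_smul]
  · rw [h3, hV, Matrix.smul_mul, Matrix.smul_mul, Matrix.mul_smul, Matrix.mul_smul, smul_smul, ← hd]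
    congr 1
    field_simp
end
end

section
open Module

section
variable {F T : Type*} [Field F] [Ring T] [Algebra F T]
    {S : ZMod 2 → Submodule F T} {φ : T →ₗ[F] T} {i : F} {σ θ : T →ₗ[F] T}

/-- Conjugation of a matrix representation by an invertible rectangular matrix. -/
def conjHom {N M : Type*} [Fintype N] [DecidableEq N] [Fintype M] [DecidableEq M]
    (f : T →ₐ[F] Matrix N N F) (G : Matrix N M F) (H : Matrix M N F)
    (hHG : H * G = 1) (hGH : G * H = 1) : T →ₐ[F] Matrix M M F :=
  AlgHom.ofLinearMap
    { toFun := fun x => H * f x * G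
      map_add' := fun x y => by rw [map_add, Matrix.mul_add, Matrix.add_mul]
      map_smul' := fun c x => by
        rw [map_smul, Matrix.mul_smul, Matrix.smul_mul, RingHom.id_apply] }
    (by
      change H * f 1 * G = 1
      rw [map_one, Matrix.mul_one, hHG])
    (by
      intro x y
      change H * f (x * y) * G = (H * f x * G) * (H * f y * G)
      rw [map_mul]
      simp only [Matrix.mul_assoc]
      rw [← Matrix.mul_assoc G H, hGH, Matrix.one_mul])

theorem conjHom_apply {N M : Type*} [Fintype N] [DecidableEq N] [Fintype M] [DecidableEq M]
    (f : T →ₐ[F] Matrix N N F) (G : Matrix N M F) (H : Matrix M N F)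
    (hHG : H * G = 1) (hGH : G * H = 1) (x : T) :
    conjHom f G H hHG hGH x = H * f x * G := rfl

theorem conjHom_eq_zero {N M : Type*} [Fintype N] [DecidableEq N] [Fintype M] [DecidableEq M]
    (f : T →ₐ[F] Matrix N N F) (G : Matrix N M F) (H : Matrix M N F)
    (hHG : H * G = 1) (hGH : G * H = 1) (x : T) :
    conjHom f G H hHG hGH x = 0 ↔ f x = 0 := by
  rw [conjHom_apply]
  constructor
  · intro h
    have : G * (H * f x * G) * H = f x := by
      simp only [Matrix.mul_assoc]
      rw [← Matrix.mul_assoc G H, hGH, Matrix.one_mul, Matrix.mul_one]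
    rw [← this, h, Matrix.mul_zero, Matrix.zero_mul]
  · intro h
    rw [h, Matrix.mul_zero, Matrix.zero_mul]

theorem conjHom_surj {N M : Type*} [Fintype N] [DecidableEq N] [Fintype M] [DecidableEq M]
    (f : T →ₐ[F] Matrix N N F) (hf : Function.Surjective f) (G : Matrix N M F) (H : Matrix M N F)
    (hHG : H * G = 1) (hGH : G * H = 1) : Function.Surjective (conjHom f G H hHG hGH) := by
  intro y
  obtain ⟨x, hx⟩ := hf (G * y * H)
  refine ⟨x, ?_⟩
  rw [conjHom_apply, hx]
  simp only [Matrix.mul_assoc]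
  rw [hHG, Matrix.mul_one, ← Matrix.mul_assoc, hHG, Matrix.one_mul]

theorem conjHom_sigma {N : ℕ} {n m : ℕ} (f : T →ₐ[F] Matrix (Fin N) (Fin N) F)
    (U : Matrix (Fin N) (Fin N) F) (hfs : ∀ x, f (σ x) = U * f x * U)
    (G : Matrix (Fin N) (Fin n ⊕ Fin m) F) (H : Matrix (Fin n ⊕ Fin m) (Fin N) F)
    (hHG : H * G = 1) (hGH : G * H = 1) (hU : U * G = G * dg n m (-1 : F)) (x : T) :
    conjHom f G H hHG hGH (σ x)
      = dg n m (-1 : F) * conjHom f G H hHG hGH x * dg n m (-1 : F) := by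
  have hHU : H * U = dg n m (-1 : F) * H := by
    calc H * U = H * (U * G) * H := by
          simp only [Matrix.mul_assoc]; rw [hGH, Matrix.mul_one]
      _ = _ := by rw [hU, ← Matrix.mul_assoc, hHG, Matrix.one_mul]
  rw [conjHom_apply, conjHom_apply, hfs]
  calc H * (U * f x * U) * G = (H * U) * f x * (U * G) := by simp only [Matrix.mul_assoc]
    _ = _ := by rw [hHU, hU]; simp only [Matrix.mul_assoc]

theorem mem_S_iff (h2 : (2 : F) ≠ 0) (D : ThetaData S φ i σ θ) {n m : ℕ}
    (e : T →ₐ[F] Matrix (Fin n ⊕ Fin m) (Fin n ⊕ Fin m) F)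
    (he : ∀ x, e (σ x) = dg n m (-1 : F) * e x * dg n m (-1 : F)) (p : ZMod 2) (x : T)
    (hx : x ∈ S p) : e x ∈ matSuper F n m p := by
  rcases zmod2_cases p with rfl | rfl
  · rw [mem_matSuper_zero h2, ← he, D.s0 x hx]
  · rw [mem_matSuper_one h2, ← he, D.s1 x hx, map_neg]

theorem S_map (h2 : (2 : F) ≠ 0) (D : ThetaData S φ i σ θ) {n m : ℕ}
    (e : T ≃ₐ[F] Matrix (Fin n ⊕ Fin m) (Fin n ⊕ Fin m) F)
    (he : ∀ x, e (σ x) = dg n m (-1 : F) * e x * dg n m (-1 : F)) (p : ZMod 2) :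
    (S p).map e.toLinearMap = matSuper F n m p := by
  apply le_antisymm
  · rintro _ ⟨x, hx, rfl⟩
    exact mem_S_iff h2 D e.toAlgHom he p x hx
  · intro y hy
    obtain ⟨x, rfl⟩ := e.surjective y
    refine ⟨x, ?_, rfl⟩
    rcases zmod2_cases p with rfl | rfl
    · rw [mem_matSuper_zero h2, ← he] at hy
      exact D.m0 x (e.injective hy)
    · rw [mem_matSuper_one h2, ← he, ← map_neg] at hy
      exact D.m1 x (e.injective hy)

theorem star_form (h2 : (2 : F) ≠ 0) (hi : i ^ 2 = -1) (D : ThetaData S φ i σ θ) {n m : ℕ}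
    (e : T →ₐ[F] Matrix (Fin n ⊕ Fin m) (Fin n ⊕ Fin m) F)
    (he : ∀ x, e (σ x) = dg n m (-1 : F) * e x * dg n m (-1 : F))
    (Φ : Matrix (Fin n ⊕ Fin m) (Fin n ⊕ Fin m) F) (hΦ : IsUnit Φ.det)
    (ht : ∀ x, dg n m i * Φ * e (θ x) = (e x).transpose * (dg n m i * Φ)) (x : T) :
    e (φ x) = matStarL F Φ (e x) := by
  have hii : -i * i = 1 := by linear_combination -hi
  have key : ∀ x, dg n m (-i) * (e x).transpose * dg n m i * Φ = Φ * e (θ x) := by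
    intro x
    rw [mul_assoc, mul_assoc, ← ht, ← mul_assoc, ← mul_assoc, dg_mul, hii, dg_one, one_mul]
  suffices h : Φ * e (φ x) = tauL F matPar (e x) * Φ by
    change e (φ x) = Φ⁻¹ * tauL F matPar (e x) * Φ
    rw [mul_assoc, ← h, ← mul_assoc, Matrix.nonsing_inv_mul _ hΦ, one_mul]
  obtain ⟨a, ha, b, hb, rfl⟩ := D.dec x
  simp only [map_add, mul_add, add_mul]
  congr 1
  · rw [tau_even _ (mem_S_iff h2 D e he 0 a ha) (-i) i hii, key, D.t0 a ha]
  · rw [tau_odd _ (mem_S_iff h2 D e he 1 b hb) (-i) (by rw [neg_sq, hi]), neg_neg, Matrix.smul_mul,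
      key, D.t1 b hb, map_smul, Matrix.mul_smul, smul_smul, hii, one_smul]

theorem exists_psi (D : ThetaData S φ i σ θ)
    {N : ℕ} [NeZero N] (f : T →ₐ[F] Matrix (Fin N) (Fin N) F) (hf : Function.Surjective f)
    (h0 : ∀ x, f x = 0 → x = 0) (U : Matrix (Fin N) (Fin N) F) (hU : U * U = 1)
    (hfs : ∀ x, f (σ x) = U * f x * U) :
    ∃ (Ψ Ψi : Matrix (Fin N) (Fin N) F) (c : F), Ψ * Ψi = 1 ∧
      (∀ x, f (θ x) = Ψi * (f x).transpose * Ψ) ∧ Ψ.transpose = c • (Ψ * U) := by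
  obtain ⟨W, W', h1, h2, h3⟩ := descend f (D.tHom f) hf (D.tHom_surj f hf) (by
    intro x hx
    rw [h0 x hx]; exact Submodule.zero_mem _)
  have hΨ : W.transpose * W'.transpose = 1 := by rw [← Matrix.transpose_mul, h2, Matrix.transpose_one]
  have hΨ' : W'.transpose * W.transpose = 1 := by
    rw [← Matrix.transpose_mul, h1, Matrix.transpose_one]
  have ht : ∀ x, f (θ x) = W'.transpose * (f x).transpose * W.transpose := by
    intro x
    have := congrArg Matrix.transpose (h3 x)
    rw [D.tHom_apply, Matrix.transpose_transpose] at this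
    rw [this, Matrix.transpose_mul, Matrix.transpose_mul, mul_assoc]
  have hs : ∀ x, U * f x * U = W'.transpose * W * f x * W' * W.transpose := by
    intro x
    rw [← hfs, ← D.tt, ht, ht]
    simp only [Matrix.transpose_mul, Matrix.transpose_transpose, mul_assoc]
  have hZ : ∀ X, (U * (W'.transpose * W)) * X = X * (U * (W'.transpose * W)) := by
    intro X
    obtain ⟨x, rfl⟩ := hf X
    have e2 : W' * W.transpose * (W'.transpose * W) = 1 := by
      rw [mul_assoc, ← mul_assoc W.transpose, hΨ, one_mul, h2]
    calc U * (W'.transpose * W) * f x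
        = U * ((W'.transpose * W * f x * W' * W.transpose) * (W'.transpose * W)) := by
          rw [mul_assoc _ W' W.transpose, mul_assoc _ (W' * W.transpose), e2, mul_one, mul_assoc]
      _ = (U * U) * f x * (U * (W'.transpose * W)) := by rw [← hs]; simp only [mul_assoc]
      _ = _ := by rw [hU, one_mul]
  obtain ⟨c, hc⟩ := matrix_central _ hZ
  refine ⟨W.transpose, W'.transpose, c, hΨ, ht, ?_⟩
  rw [Matrix.transpose_transpose]
  have e1 : W'.transpose * W = c • U := by
    calc W'.transpose * W = U * (U * (W'.transpose * W)) := by rw [← mul_assoc, hU, one_mul]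
      _ = _ := by rw [hc, Matrix.mul_smul, mul_one]
  calc W = W.transpose * (W'.transpose * W) := by rw [← mul_assoc, hΨ, one_mul]
    _ = _ := by rw [e1, Matrix.mul_smul]

theorem psi_transport {N : ℕ} {M : Type*} [Fintype M] [DecidableEq M]
    (f : T →ₐ[F] Matrix (Fin N) (Fin N) F)
    (Ψ Ψi : Matrix (Fin N) (Fin N) F) (hΨ : Ψ * Ψi = 1)
    (ht : ∀ x, f (θ x) = Ψi * (f x).transpose * Ψ)
    (G : Matrix (Fin N) M F) (H : Matrix M (Fin N) F)
    (hHG : H * G = 1) (hGH : G * H = 1) (x : T) :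
    G.transpose * Ψ * G * conjHom f G H hHG hGH (θ x) =
      (conjHom f G H hHG hGH x).transpose * (G.transpose * Ψ * G) := by
  rw [conjHom_apply, conjHom_apply, ht]
  have e1 : H.transpose * G.transpose = 1 := by
    rw [← Matrix.transpose_mul, hGH, Matrix.transpose_one]
  simp only [Matrix.transpose_mul, Matrix.mul_assoc]
  rw [← Matrix.mul_assoc G H, hGH, Matrix.one_mul, ← Matrix.mul_assoc Ψ Ψi, hΨ, Matrix.one_mul,
    ← Matrix.mul_assoc H.transpose, e1, Matrix.one_mul]

theorem dg_fromBlocks {n m : ℕ} (i : F) (A : Matrix (Fin n) (Fin n) F) (B : Matrix (Fin n) (Fin m) F)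
    (C : Matrix (Fin m) (Fin n) F) (E : Matrix (Fin m) (Fin m) F) :
    dg n m i * Matrix.fromBlocks A B C E = Matrix.fromBlocks A B (i • C) (i • E) := by
  ext x y
  rw [dg, Matrix.diagonal_mul]
  rcases x with x | x <;> rcases y with y | y <;> simp

theorem case1 [IsAlgClosed F] (h2 : (2 : F) ≠ 0) (hi : i ^ 2 = -1) (D : ThetaData S φ i σ θ)
    {N : ℕ} [NeZero N] (f : T →ₐ[F] Matrix (Fin N) (Fin N) F) (hf : Function.Surjective f)
    (h0 : ∀ x, f x = 0 → x = 0) :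
    (∃ (n k : ℕ), ∃ e : T ≃ₐ[F] Matrix (Fin n ⊕ Fin (2 * k)) (Fin n ⊕ Fin (2 * k)) F,
      (∀ p, (S p).map e.toLinearMap = matSuper F n (2 * k) p) ∧
      (∀ x, e (φ x) = matStarL F (Matrix.fromBlocks 1 0 0 (stdQ F k)) (e x))) ∨
    (∃ n : ℕ, ∃ e : T ≃ₐ[F] Matrix (Fin n ⊕ Fin n) (Fin n ⊕ Fin n) F,
      (∀ p, (S p).map e.toLinearMap = matSuper F n n p) ∧
      (∀ x, e (φ x)
        = matStarL F (Matrix.fromBlocks 0 (1 : Matrix (Fin n) (Fin n) F) 1 0) (e x))) := by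
  obtain ⟨U, hU, hfs⟩ := sigma_inner D f hf (fun x hx => by rw [h0 x hx]; simp)
  obtain ⟨Ψ, Ψi, c, hΨ, ht, hc⟩ := exists_psi D f hf h0 U hU hfs
  obtain ⟨U', hU', hUU, h⟩ := normal_forms h2 i hi U Ψ Ψi hU hΨ c hc
  have hfs' : ∀ x, f (σ x) = U' * f x * U' := fun x => by rw [hfs, hUU]
  have inj : ∀ {M : Type} [Fintype M] [DecidableEq M] (G : Matrix (Fin N) M F) (H : Matrix M (Fin N) F)
      (hHG : H * G = 1) (hGH : G * H = 1), Function.Injective (conjHom f G H hHG hGH) := by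
    intro M _ _ G H hHG hGH
    rw [injective_iff_map_eq_zero]
    intro x hx
    exact h0 x ((conjHom_eq_zero f G H hHG hGH x).mp hx)
  have unit : ∀ {n m : ℕ} (G : Matrix (Fin N) (Fin n ⊕ Fin m) F) (H : Matrix (Fin n ⊕ Fin m) (Fin N) F)
      (hHG : H * G = 1) (hGH : G * H = 1) (Φ : Matrix (Fin n ⊕ Fin m) (Fin n ⊕ Fin m) F),
      G.transpose * Ψ * G = dg n m i * Φ → IsUnit Φ.det := by
    intro n m G H hHG hGH Φ hΦ
    have e1 : (dg n m i * Φ) * (H * Ψi * H.transpose) = 1 := by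
      rw [← hΦ]
      simp only [Matrix.mul_assoc]
      rw [← Matrix.mul_assoc G H, hGH, Matrix.one_mul, ← Matrix.mul_assoc Ψ Ψi, hΨ, Matrix.one_mul,
        ← Matrix.transpose_mul, hHG, Matrix.transpose_one]
    have e2 := congrArg Matrix.det e1
    rw [Matrix.det_mul, Matrix.det_mul, Matrix.det_one] at e2
    exact IsUnit.of_mul_eq_one _ (by rw [mul_comm (dg n m i).det, mul_assoc] at e2; exact e2)
  rcases h with ⟨n, k, G, H, hHG, hGH, hUG, hΦ⟩ | ⟨n, G, H, hHG, hGH, hUG, hΦ⟩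
  · left
    let e := AlgEquiv.ofBijective (conjHom f G H hHG hGH) ⟨inj G H hHG hGH, conjHom_surj f hf G H hHG hGH⟩
    have he := conjHom_sigma f U' hfs' G H hHG hGH hUG
    have hΦ' : G.transpose * Ψ * G = dg n (2 * k) i * Matrix.fromBlocks 1 0 0 (stdQ F k) := by
      rw [hΦ, dg_fromBlocks, smul_zero]
    refine ⟨n, k, e, S_map h2 D e he, ?_⟩
    exact star_form h2 hi D (conjHom f G H hHG hGH) he _ (unit G H hHG hGH _ hΦ')
      (fun x => by rw [← hΦ']; exact psi_transport f Ψ Ψi hΨ ht G H hHG hGH x)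
  · right
    let e := AlgEquiv.ofBijective (conjHom f G H hHG hGH) ⟨inj G H hHG hGH, conjHom_surj f hf G H hHG hGH⟩
    have he := conjHom_sigma f U' hfs' G H hHG hGH hUG
    have hΦ' : G.transpose * Ψ * G = dg n n i * Matrix.fromBlocks 0 1 1 0 := by
      rw [hΦ, dg_fromBlocks, smul_zero]
    refine ⟨n, e, S_map h2 D e he, ?_⟩
    exact star_form h2 hi D (conjHom f G H hHG hGH) he _ (unit G H hHG hGH _ hΦ')
      (fun x => by rw [← hΦ']; exact psi_transport f Ψ Ψi hΨ ht G H hHG hGH x)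
end
end

section
open Module

section
variable {F T : Type*} [Field F] [Ring T] [Algebra F T]
    {S : ZMod 2 → Submodule F T} {φ : T →ₗ[F] T} {i : F} {σ θ : T →ₗ[F] T}

theorem mem_S_prod (h2 : (2 : F) ≠ 0) (D : ThetaData S φ i σ θ) {n m : ℕ}
    (e1 e2 : T →ₐ[F] Matrix (Fin n ⊕ Fin m) (Fin n ⊕ Fin m) F)
    (he1 : ∀ x, e1 (σ x) = dg n m (-1 : F) * e1 x * dg n m (-1 : F))
    (he2 : ∀ x, e2 (σ x) = dg n m (-1 : F) * e2 x * dg n m (-1 : F))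
    (hinj : ∀ x, e1 x = 0 → e2 x = 0 → x = 0) (p : ZMod 2) (x : T) :
    x ∈ S p ↔ (e1 x ∈ matSuper F n m p ∧ e2 x ∈ matSuper F n m p) := by
  constructor
  · intro hx
    exact ⟨mem_S_iff h2 D e1 he1 p x hx, mem_S_iff h2 D e2 he2 p x hx⟩
  · rintro ⟨h, h'⟩
    rcases zmod2_cases p with rfl | rfl
    · rw [mem_matSuper_zero h2, ← he1] at h
      rw [mem_matSuper_zero h2, ← he2] at h'
      refine D.m0 x (sub_eq_zero.mp (hinj _ ?_ ?_))
      · rw [map_sub, h, sub_self]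
      · rw [map_sub, h', sub_self]
    · rw [mem_matSuper_one h2, ← he1] at h
      rw [mem_matSuper_one h2, ← he2] at h'
      refine D.m1 x (sub_eq_zero.mp (hinj _ ?_ ?_))
      · rw [map_sub, h, map_neg, sub_self]
      · rw [map_sub, h', map_neg, sub_self]

theorem case2 [IsAlgClosed F] (h2 : (2 : F) ≠ 0) (hi : i ^ 2 = -1) (D : ThetaData S φ i σ θ)
    {N : ℕ} [NeZero N] (f : T →ₐ[F] Matrix (Fin N) (Fin N) F) (hf : Function.Surjective f)
    (hinj : ∀ x, f x = 0 → f (σ x) = 0 → f (θ x) = 0 → f (σ (θ x)) = 0 → x = 0)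
    (u : T) (hu : f u = 0) (hu' : f (θ u) = 1)
    (hk : ∀ x, f x = 0 → f (σ x) = 0) :
    ∃ (n m : ℕ), ∃ e : T ≃ₐ[F]
        (Matrix (Fin n ⊕ Fin m) (Fin n ⊕ Fin m) F ×
          Matrix (Fin n ⊕ Fin m) (Fin n ⊕ Fin m) F),
      (∀ p, (S p).map e.toLinearMap = (matSuper F n m p).prod (matSuper F n m p)) ∧
      (∀ x, e (φ x) = (tauInvL F matPar (e x).2, tauL F matPar (e x).1)) := by
  have hii : i * -i = 1 := by linear_combination -hi
  have hii' : -i * i = 1 := by linear_combination -hi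
  obtain ⟨U, hU, hfs⟩ := sigma_inner D f hf hk
  obtain ⟨n, m, G, H, hHG, hGH, hUG⟩ := exists_split h2 U hU
  let e1 := conjHom f G H hHG hGH
  have he1 : ∀ x, e1 (σ x) = dg n m (-1 : F) * e1 x * dg n m (-1 : F) :=
    conjHom_sigma f U hfs G H hHG hGH hUG
  have e10 : ∀ x, e1 x = 0 ↔ f x = 0 := conjHom_eq_zero f G H hHG hGH
  have hP1 : dg n m i * dg n m (-i) = 1 := by rw [dg_mul, hii, dg_one]
  have hP2 : dg n m (-i) * dg n m i = 1 := by rw [dg_mul, hii', dg_one]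
  let e2 := conjHom (D.tHom e1) (dg n m (-i)) (dg n m i) hP1 hP2
  have e2a : ∀ x, e2 x = dg n m i * (e1 (θ x)).transpose * dg n m (-i) := fun x => rfl
  have e20 : ∀ x, e2 x = 0 ↔ f (θ x) = 0 := fun x => by
    rw [← e10]
    refine (conjHom_eq_zero _ _ _ hP1 hP2 x).trans ?_
    rw [D.tHom_apply, Matrix.transpose_eq_zero]
  have he2 : ∀ x, e2 (σ x) = dg n m (-1 : F) * e2 x * dg n m (-1 : F) := by
    intro x
    have tr : (dg n m (-1 : F)).transpose = dg n m (-1 : F) := by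
      rw [dg, Matrix.diagonal_transpose]
    rw [e2a, e2a, D.ts, he1, Matrix.transpose_mul, Matrix.transpose_mul, tr]
    simp only [← mul_assoc]
    rw [dg_mul, dg_mul, mul_assoc _ (dg n m (-1 : F)), mul_assoc _ (dg n m (-i)), dg_mul, dg_mul,
      mul_comm i, mul_comm (-1 : F) (-i)]
  have e1s : Function.Surjective e1 := conjHom_surj f hf G H hHG hGH
  have e2s : Function.Surjective e2 :=
    conjHom_surj _ (D.tHom_surj e1 e1s) _ _ hP1 hP2
  have hinj' : ∀ x, e1 x = 0 → e2 x = 0 → x = 0 := by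
    intro x h1 h2
    rw [e10] at h1
    rw [e20] at h2
    exact hinj x h1 (hk _ h1) h2 (hk _ h2)
  have hu2 : e2 u = 1 := by
    rw [e2a]
    change dg n m i * (H * f (θ u) * G).transpose * dg n m (-i) = 1
    rw [hu', Matrix.mul_one, hHG, Matrix.transpose_one, mul_one, hP1]
  have hbij : Function.Bijective (AlgHom.prod e1 e2) := by
    constructor
    · rw [injective_iff_map_eq_zero]
      intro x hx
      rw [AlgHom.prod_apply, Prod.mk_eq_zero] at hx
      exact hinj' x hx.1 hx.2
    · rintro ⟨a, b⟩
      obtain ⟨a, rfl⟩ := e1s a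
      obtain ⟨b, rfl⟩ := e2s b
      obtain ⟨x, h1, h2⟩ := joint_surj e1 e2 u ((e10 u).mpr hu) hu2 a b
      exact ⟨x, by rw [AlgHom.prod_apply, h1, h2]⟩
  have star : ∀ x, e2 (φ x) = tauL F matPar (e1 x) := by
    intro x
    obtain ⟨a, ha, b, hb, rfl⟩ := D.dec x
    simp only [map_add]
    congr 1
    · rw [tau_even _ (mem_S_iff h2 D e1 he1 0 a ha) i (-i) hii, e2a, D.t0 _ (D.gr 0 a ha), D.ff]
    · rw [tau_odd _ (mem_S_iff h2 D e1 he1 1 b hb) i hi, e2a, D.t1 _ (D.gr 1 b hb), D.ff,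
        map_smul, Matrix.transpose_smul, Matrix.mul_smul, Matrix.smul_mul]
  refine ⟨n, m, AlgEquiv.ofBijective (AlgHom.prod e1 e2) hbij, ?_, ?_⟩
  · intro p
    ext y
    obtain ⟨x, rfl⟩ := hbij.2 y
    have h := mem_S_prod h2 D e1 e2 he1 he2 hinj' p x
    constructor
    · rintro ⟨x', hx', he⟩
      have : x' = x := hbij.1 he
      subst this
      exact h.mp hx'
    · intro hy
      exact ⟨x, h.mpr hy, rfl⟩
  · intro x
    change (e1 (φ x), e2 (φ x)) = (tauInvL F matPar (e2 x), tauL F matPar (e1 x))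
    rw [star]
    congr 1
    have := star (φ x)
    rw [D.ff] at this
    rw [this, tauInv_tau]

/-- Block-diagonal sum of two representations. -/
def diagHom {N : ℕ} (f g : T →ₐ[F] Matrix (Fin N) (Fin N) F) :
    T →ₐ[F] Matrix (Fin N ⊕ Fin N) (Fin N ⊕ Fin N) F :=
  AlgHom.ofLinearMap
    { toFun := fun x => Matrix.fromBlocks (f x) 0 0 (g x)
      map_add' := fun x y => by simp [Matrix.fromBlocks_add]
      map_smul' := fun c x => by simp [Matrix.fromBlocks_smul] }
    (by
      change Matrix.fromBlocks (f 1) 0 0 (g 1) = 1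
      rw [map_one, map_one, Matrix.fromBlocks_one])
    (by
      intro x y
      change Matrix.fromBlocks (f (x * y)) 0 0 (g (x * y)) =
        Matrix.fromBlocks (f x) 0 0 (g x) * Matrix.fromBlocks (f y) 0 0 (g y)
      simp [Matrix.fromBlocks_multiply])

theorem diagHom_apply {N : ℕ} (f g : T →ₐ[F] Matrix (Fin N) (Fin N) F) (x : T) :
    diagHom f g x = Matrix.fromBlocks (f x) 0 0 (g x) := rfl

/-- The Hadamard matrix `[[1,1],[1,-1]]` -/
def had (F : Type*) [Field F] (N : ℕ) : Matrix (Fin N ⊕ Fin N) (Fin N ⊕ Fin N) F :=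
  Matrix.fromBlocks 1 1 1 (-1)

theorem had_mul (N : ℕ) : had F N * had F N = (2 : F) • 1 := by
  rw [had, Matrix.fromBlocks_multiply, ← Matrix.fromBlocks_one, Matrix.fromBlocks_smul]
  simp [two_smul, one_add_one_eq_two]

theorem had_inv (h2 : (2 : F) ≠ 0) (N : ℕ) : ((2 : F)⁻¹ • had F N) * had F N = 1 := by
  rw [Matrix.smul_mul, had_mul, smul_smul, inv_mul_cancel₀ h2, one_smul]

theorem had_inv' (h2 : (2 : F) ≠ 0) (N : ℕ) : had F N * ((2 : F)⁻¹ • had F N) = 1 := by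
  rw [Matrix.mul_smul, had_mul, smul_smul, inv_mul_cancel₀ h2, one_smul]

/-- The representation of type `Q` attached to `f`. -/
def qHom (h2 : (2 : F) ≠ 0) (D : ThetaData S φ i σ θ) {N : ℕ}
    (f : T →ₐ[F] Matrix (Fin N) (Fin N) F) :
    T →ₐ[F] Matrix (Fin N ⊕ Fin N) (Fin N ⊕ Fin N) F :=
  conjHom (diagHom f (f.comp D.sHom)) (had F N) ((2 : F)⁻¹ • had F N) (had_inv h2 N) (had_inv' h2 N)

theorem qHom_apply (h2 : (2 : F) ≠ 0) (D : ThetaData S φ i σ θ) {N : ℕ}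
    (f : T →ₐ[F] Matrix (Fin N) (Fin N) F) (x : T) :
    qHom h2 D f x = Matrix.fromBlocks ((2 : F)⁻¹ • (f x + f (σ x))) ((2 : F)⁻¹ • (f x - f (σ x)))
      ((2 : F)⁻¹ • (f x - f (σ x))) ((2 : F)⁻¹ • (f x + f (σ x))) := by
  change ((2 : F)⁻¹ • had F N) * Matrix.fromBlocks (f x) 0 0 (f (σ x)) * had F N = _
  rw [had, Matrix.smul_mul, Matrix.smul_mul, Matrix.fromBlocks_multiply,
    Matrix.fromBlocks_multiply, Matrix.fromBlocks_smul]
  simp [sub_eq_add_neg]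

theorem qHom_dec (h2 : (2 : F) ≠ 0) (D : ThetaData S φ i σ θ) {N : ℕ}
    (f : T →ₐ[F] Matrix (Fin N) (Fin N) F) (a b : T) (ha : a ∈ S 0) (hb : b ∈ S 1) :
    qHom h2 D f (a + b) = Matrix.fromBlocks (f a) (f b) (f b) (f a) := by
  rw [qHom_apply, map_add, map_add, D.s0 a ha, D.s1 b hb, map_add, map_neg]
  have e1 : (2 : F)⁻¹ • (f a + f b + (f a + -f b)) = f a := by
    rw [show f a + f b + (f a + -f b) = (2 : F) • f a by rw [two_smul]; abel, smul_smul,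
      inv_mul_cancel₀ h2, one_smul]
  have e2 : (2 : F)⁻¹ • (f a + f b - (f a + -f b)) = f b := by
    rw [show f a + f b - (f a + -f b) = (2 : F) • f b by rw [two_smul]; abel, smul_smul,
      inv_mul_cancel₀ h2, one_smul]
  rw [e1, e2]

theorem qHom_eq_zero (h2 : (2 : F) ≠ 0) (D : ThetaData S φ i σ θ) {N : ℕ}
    (f : T →ₐ[F] Matrix (Fin N) (Fin N) F) (x : T) :
    qHom h2 D f x = 0 ↔ f x = 0 ∧ f (σ x) = 0 := by
  refine (conjHom_eq_zero _ _ _ (had_inv h2 N) (had_inv' h2 N) x).trans ?_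
  rw [diagHom_apply, ← Matrix.fromBlocks_zero, Matrix.fromBlocks_inj]
  simp [D.sHom_apply]

theorem qHom_sigma (h2 : (2 : F) ≠ 0) (D : ThetaData S φ i σ θ) {N : ℕ}
    (f : T →ₐ[F] Matrix (Fin N) (Fin N) F) (x : T) :
    qHom h2 D f (σ x) = dg N N (-1 : F) * qHom h2 D f x * dg N N (-1 : F) := by
  obtain ⟨a, ha, b, hb, rfl⟩ := D.dec x
  rw [map_add σ, D.s0 a ha, D.s1 b hb, qHom_dec h2 D f a b ha hb,
    qHom_dec h2 D f a (-b) ha (Submodule.neg_mem _ hb)]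
  ext x y
  rw [dg_mul_apply]
  rcases x with x | x <;> rcases y with y | y <;> simp

theorem qHom_surj (h2 : (2 : F) ≠ 0) (D : ThetaData S φ i σ θ) {N : ℕ}
    (f : T →ₐ[F] Matrix (Fin N) (Fin N) F) (hf : Function.Surjective f)
    (v : T) (hv : f v = 0) (hv' : f (σ v) = 1) (A B : Matrix (Fin N) (Fin N) F) :
    ∃ x, qHom h2 D f x = Matrix.fromBlocks A B B A := by
  obtain ⟨a, ha⟩ := hf (A + B)
  obtain ⟨b, hb⟩ := hf (A - B)
  obtain ⟨x, h1, h3⟩ := joint_surj f (f.comp D.sHom) v hv hv' a (σ b)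
  have h3 : f (σ x) = f (σ (σ b)) := h3
  refine ⟨x, ?_⟩
  rw [qHom_apply, h1, h3, D.ss, ha, hb]
  have e1 : (2 : F)⁻¹ • (A + B + (A - B)) = A := by
    rw [show A + B + (A - B) = (2 : F) • A by rw [two_smul]; abel, smul_smul,
      inv_mul_cancel₀ h2, one_smul]
  have e2 : (2 : F)⁻¹ • (A + B - (A - B)) = B := by
    rw [show A + B - (A - B) = (2 : F) • B by rw [two_smul]; abel, smul_smul,
      inv_mul_cancel₀ h2, one_smul]
  rw [e1, e2]

theorem qTransp_fromBlocks {N : ℕ} (c : F) (A B : Matrix (Fin N) (Fin N) F) :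
    qTransp F c (Matrix.fromBlocks A B B A) =
      Matrix.fromBlocks A.transpose (c • B.transpose) (c • B.transpose) A.transpose := by
  ext x y
  rcases x with x | x <;> rcases y with y | y <;> simp [qTransp, retag, matPar]

theorem swap_fromBlocks {N : ℕ} (A B : Matrix (Fin N) (Fin N) F) (a b : Fin N ⊕ Fin N) :
    Matrix.fromBlocks A B B A (Sum.swap a) (Sum.swap b) = Matrix.fromBlocks A B B A a b := by
  rcases a with x | x <;> rcases b with y | y <;> simp

theorem eq_fromBlocks_of_swap {N : ℕ} (X : Matrix (Fin N ⊕ Fin N) (Fin N ⊕ Fin N) F)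
    (h : ∀ a b, X (Sum.swap a) (Sum.swap b) = X a b) :
    X = Matrix.fromBlocks X.toBlocks₁₁ X.toBlocks₁₂ X.toBlocks₁₂ X.toBlocks₁₁ := by
  ext x y
  rcases x with x | x <;> rcases y with y | y
  · rfl
  · rfl
  · exact (h (Sum.inr x) (Sum.inl y)).symm
  · exact (h (Sum.inr x) (Sum.inr y)).symm

theorem case3 (h2 : (2 : F) ≠ 0) (hi : i ^ 2 = -1) (D : ThetaData S φ i σ θ)
    {N : ℕ} [NeZero N] (f : T →ₐ[F] Matrix (Fin N) (Fin N) F) (hf : Function.Surjective f)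
    (hinj : ∀ x, f x = 0 → f (σ x) = 0 → f (θ x) = 0 → f (σ (θ x)) = 0 → x = 0)
    (u : T) (hu : f u = 0) (hus : f (σ u) = 0) (hu' : f (θ u) = 1) (hus' : f (σ (θ u)) = 1)
    (v : T) (hv : f v = 0) (hv' : f (σ v) = 1) :
    ∃ (n : ℕ) (c : F), c ^ 2 = -1 ∧
      ∃ ψ : T →ₐ[F] (Matrix (Fin n ⊕ Fin n) (Fin n ⊕ Fin n) F ×
          Matrix (Fin n ⊕ Fin n) (Fin n ⊕ Fin n) F),
        Function.Injective ψ ∧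
        (∀ x, (∀ a b, (ψ x).1 (Sum.swap a) (Sum.swap b) = (ψ x).1 a b) ∧
              (∀ a b, (ψ x).2 (Sum.swap a) (Sum.swap b) = (ψ x).2 a b)) ∧
        (∀ X Y : Matrix (Fin n ⊕ Fin n) (Fin n ⊕ Fin n) F,
          (∀ a b, X (Sum.swap a) (Sum.swap b) = X a b) →
          (∀ a b, Y (Sum.swap a) (Sum.swap b) = Y a b) → ∃ x, ψ x = (X, Y)) ∧
        (∀ (p : ZMod 2) (x : T), x ∈ S p ↔
          ((ψ x).1 ∈ matSuper F n n p ∧ (ψ x).2 ∈ matSuper F n n p)) ∧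
        (∀ x, ψ (φ x) = (qTransp F (-c) (ψ x).2, qTransp F c (ψ x).1)) := by
  have hii' : -i * i = 1 := by linear_combination -hi
  let g := D.tHom f
  have hg : ∀ x, g x = (f (θ x)).transpose := fun _ => rfl
  have gsurj : Function.Surjective g := D.tHom_surj f hf
  let e1 := qHom h2 D f
  let e2 := qHom h2 D g
  have hinj' : ∀ x, e1 x = 0 → e2 x = 0 → x = 0 := by
    intro x h1 h3
    rw [qHom_eq_zero] at h1 h3
    rw [hg, hg, Matrix.transpose_eq_zero, Matrix.transpose_eq_zero, D.ts] at h3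
    exact hinj x h1.1 h1.2 h3.1 h3.2
  have hu1 : e1 u = 0 := (qHom_eq_zero h2 D f u).mpr ⟨hu, hus⟩
  have hu2 : e2 u = 1 := by
    have : e2 (u - 1) = 0 := by
      rw [qHom_eq_zero, map_sub σ, D.sone, map_sub, map_sub, map_one, hg, hg, D.ts, hu', hus',
        Matrix.transpose_one, sub_self]
      exact ⟨rfl, rfl⟩
    rwa [map_sub, map_one, sub_eq_zero] at this
  refine ⟨N, i, hi, AlgHom.prod e1 e2, ?_, ?_, ?_, ?_, ?_⟩
  · rw [injective_iff_map_eq_zero]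
    intro x hx
    rw [AlgHom.prod_apply, Prod.mk_eq_zero] at hx
    exact hinj' x hx.1 hx.2
  · intro x
    change (∀ a b, e1 x (Sum.swap a) (Sum.swap b) = e1 x a b) ∧
      (∀ a b, e2 x (Sum.swap a) (Sum.swap b) = e2 x a b)
    rw [show e1 x = _ from qHom_apply h2 D f x, show e2 x = _ from qHom_apply h2 D g x]
    exact ⟨swap_fromBlocks _ _, swap_fromBlocks _ _⟩
  · intro X Y hX hY
    obtain ⟨a, ha⟩ := qHom_surj h2 D f hf v hv hv' X.toBlocks₁₁ X.toBlocks₁₂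
    obtain ⟨b, hb⟩ := qHom_surj h2 D g gsurj (θ (σ v))
      (by rw [hg, D.tt, D.ss, hv, Matrix.transpose_zero])
      (by rw [hg, ← D.ts, D.ss, D.tt, hv', Matrix.transpose_one]) Y.toBlocks₁₁ Y.toBlocks₁₂
    rw [← eq_fromBlocks_of_swap X hX] at ha
    rw [← eq_fromBlocks_of_swap Y hY] at hb
    obtain ⟨x, h1, h3⟩ := joint_surj e1 e2 u hu1 hu2 a b
    exact ⟨x, by rw [AlgHom.prod_apply, h1, h3, ← ha, ← hb]⟩
  · intro p x
    exact mem_S_prod h2 D e1 e2 (qHom_sigma h2 D f) (qHom_sigma h2 D g) hinj' p x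
  · intro x
    change (e1 (φ x), e2 (φ x)) = (qTransp F (-i) (e2 x), qTransp F i (e1 x))
    obtain ⟨a, ha, b, hb, rfl⟩ := D.dec x
    rw [show e1 (a + b) = _ from qHom_dec h2 D f a b ha hb,
      show e2 (a + b) = _ from qHom_dec h2 D g a b ha hb, map_add φ,
      show e1 (φ a + φ b) = _ from qHom_dec h2 D f _ _ (D.gr 0 a ha) (D.gr 1 b hb),
      show e2 (φ a + φ b) = _ from qHom_dec h2 D g _ _ (D.gr 0 a ha) (D.gr 1 b hb),
      qTransp_fromBlocks, qTransp_fromBlocks, hg, hg, hg, hg, D.t0 a ha, D.t1 b hb,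
      D.t0 _ (D.gr 0 a ha), D.t1 _ (D.gr 1 b hb), D.ff, D.ff, Matrix.transpose_transpose,
      Matrix.transpose_transpose, map_smul, map_smul, smul_smul, hii', one_smul,
      Matrix.transpose_smul]
end
end

/-- **Proposition.** Any finite-dimensional involution simple associative superalgebra
with superinvolution `*` over an algebraically closed field of characteristic `≠ 2` is
isomorphic to one of: (1) `M_{n,m}(F)` with the orthosymplectic or transpose
superinvolution; (2) `M_{n,m}(F) ⊕ M_{n,m}(F)^{sop}` with the exchange superinvolution;
(3) `Q(n) ⊕ Q(n)^{sop}` with the exchange superinvolution.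

Here `A ⊕ A^{sop}` with the exchange superinvolution `(a,b) ↦ (b,a)` is presented in the
isomorphic form `A × A` (componentwise product) with the superinvolution
`(x, y) ↦ (s⁻¹ y, s x)`, where `s` is a super-antiautomorphism of `A` realising
`A^{sop} ≅ A`:  for `A = M_{n,m}(F)` one takes `s = τ` (the supertranspose `tauL`),
and for `A = Q(n)` one takes `s = qTransp c` with `c² = -1` (whose inverse is
`qTransp (-c)`).  `Q(n)` is presented as the subalgebra of `Sum.swap`-invariant
matrices of `M_{n,n}(F)`, and case (3) is phrased via an injective algebra homomorphism
onto `Q(n) × Q(n)`. -/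
theorem star_simple_superalgebra_classification
    (F : Type*) [Field F] [IsAlgClosed F] (hchar : (2 : F) ≠ 0)
    (T : Type*) [Ring T] [Algebra F T] [FiniteDimensional F T] [Nontrivial T]
    (S : ZMod 2 → Submodule F T) (hS : IsSuperGrading F S)
    (φ : T →ₗ[F] T) (hφ : IsSuperinvolution F S φ)
    -- `T` is `*`-simple: no nontrivial graded two-sided `*`-stable ideals
    (hsimple : ∀ I : Submodule F T,
      (∀ x ∈ I, ∀ r : T, r * x ∈ I ∧ x * r ∈ I) → I = (I ⊓ S 0) ⊔ (I ⊓ S 1) →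
      (∀ x ∈ I, φ x ∈ I) → I = ⊥ ∨ I = ⊤) :
    -- (1a) `M_{n,2k}(F)` with the orthosymplectic superinvolution
    (∃ (n k : ℕ), ∃ e : T ≃ₐ[F] Matrix (Fin n ⊕ Fin (2 * k)) (Fin n ⊕ Fin (2 * k)) F,
      (∀ p, (S p).map e.toLinearMap = matSuper F n (2 * k) p) ∧
      (∀ x, e (φ x) = matStarL F (Matrix.fromBlocks 1 0 0 (stdQ F k)) (e x))) ∨
    -- (1b) `M_{n,n}(F)` with the transpose superinvolution
    (∃ n : ℕ, ∃ e : T ≃ₐ[F] Matrix (Fin n ⊕ Fin n) (Fin n ⊕ Fin n) F,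
      (∀ p, (S p).map e.toLinearMap = matSuper F n n p) ∧
      (∀ x, e (φ x)
        = matStarL F (Matrix.fromBlocks 0 (1 : Matrix (Fin n) (Fin n) F) 1 0) (e x))) ∨
    -- (2) `M_{n,m}(F) ⊕ M_{n,m}(F)^{sop}` with the exchange superinvolution
    (∃ (n m : ℕ), ∃ e : T ≃ₐ[F]
        (Matrix (Fin n ⊕ Fin m) (Fin n ⊕ Fin m) F ×
          Matrix (Fin n ⊕ Fin m) (Fin n ⊕ Fin m) F),
      (∀ p, (S p).map e.toLinearMap = (matSuper F n m p).prod (matSuper F n m p)) ∧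
      (∀ x, e (φ x) = (tauInvL F matPar (e x).2, tauL F matPar (e x).1))) ∨
    -- (3) `Q(n) ⊕ Q(n)^{sop}` with the exchange superinvolution
    (∃ (n : ℕ) (c : F), c ^ 2 = -1 ∧
      ∃ ψ : T →ₐ[F] (Matrix (Fin n ⊕ Fin n) (Fin n ⊕ Fin n) F ×
          Matrix (Fin n ⊕ Fin n) (Fin n ⊕ Fin n) F),
        Function.Injective ψ ∧
        (∀ x, (∀ a b, (ψ x).1 (Sum.swap a) (Sum.swap b) = (ψ x).1 a b) ∧
              (∀ a b, (ψ x).2 (Sum.swap a) (Sum.swap b) = (ψ x).2 a b)) ∧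
        (∀ X Y : Matrix (Fin n ⊕ Fin n) (Fin n ⊕ Fin n) F,
          (∀ a b, X (Sum.swap a) (Sum.swap b) = X a b) →
          (∀ a b, Y (Sum.swap a) (Sum.swap b) = Y a b) → ∃ x, ψ x = (X, Y)) ∧
        (∀ (p : ZMod 2) (x : T), x ∈ S p ↔
          ((ψ x).1 ∈ matSuper F n n p ∧ (ψ x).2 ∈ matSuper F n n p)) ∧
        (∀ x, ψ (φ x) = (qTransp F (-c) (ψ x).2, qTransp F c (ψ x).1))) := by
  obtain ⟨i, hi⟩ := IsAlgClosed.exists_pow_nat_eq (-1 : F) (n := 2) (by norm_num)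
  obtain ⟨σ, θ, D⟩ := exists_theta hchar S hS φ hφ i hi
  have hs := D.simple hchar hi hsimple
  obtain ⟨N, hN, f, hf⟩ := exists_surj_matrix F T
  rcases trichotomy D hs f hf with h | ⟨hinj, ⟨u, h1, h2, h3, h4⟩, h | ⟨v, hv, hv'⟩⟩
  · rcases case1 hchar hi D f hf h with h | h
    · exact Or.inl h
    · exact Or.inr (Or.inl h)
  · exact Or.inr (Or.inr (Or.inl (case2 hchar hi D f hf hinj u h1 h3 h)))
  · exact Or.inr (Or.inr (Or.inr (case3 hchar hi D f hf hinj u h1 h2 h3 h4 v hv hv')))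
end
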